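/- arXiv:1711.02337 — 2 statements merged into one kernel-verified Lean document; each statement's English description precedes it below -/
import Mathlib

section
/- For all positive integers n and k, the following identity holds in ℚ(q): Σ over all tuples (D_1 ≤ D_2 ≤ ⋯ ≤ D_k) ∈ Dyck^k_{2n} of Π_{i=1}^k ( Π_{p∈V(D_i)} q^{2ht(p)+1} · Π_{p∈D_i} 1/(1−q^{2ht(p)+1}) ) · Π_{j=1}^{k−1} Π_{p∈D_j∩D_{j+1}} (1 − q^{−(2ht(p)+1)}) equals q^{k(k−1)(6n+8k−1)/6} times Σ over all tuples (D_1 < D_2 < ⋯ < D_k) ∈ Dyck^k_{2n} of Π_{i=1}^k ( Π_{p∈V(D_i)} q^{2ht(p)+1} · Π_{p∈D_i} 1/(1−q^{2ht(p)+1}) ), where ht(p) denotes the height (y-coordinate) of the lattice point p and V(D) is the set of valleys of D. -/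
open Finset

attribute [local instance 10] Classical.propDecidable

noncomputable section

namespace Paper

/-! ### Words and permutation statistics (all words are 1-based). -/

/-- The word (one-line notation, 1-based) of a permutation of `{1, …, N}`:
`word π i = π(i)` for `1 ≤ i ≤ N`, and `0` otherwise. -/
def word {N : ℕ} (π : Equiv.Perm (Fin N)) (i : ℕ) : ℕ :=
  if h : 1 ≤ i ∧ i ≤ N then (π ⟨i - 1, by omega⟩ : ℕ) + 1 else 0

/-- The major index of a word of length `N`: the sum of the descents. -/
def majW (N : ℕ) (w : ℕ → ℕ) : ℕ :=
  ∑ i ∈ Finset.Icc 1 (N - 1), if w (i + 1) < w i then i else 0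

/-- The number of inversions of a word of length `N`. -/
def invW (N : ℕ) (w : ℕ → ℕ) : ℕ :=
  (((Finset.Icc 1 N) ×ˢ (Finset.Icc 1 N)).filter
    fun p => p.1 < p.2 ∧ w p.2 < w p.1).card

/-- The number of descents of a word of length `m`. -/
def desW (m : ℕ) (w : ℕ → ℕ) : ℕ :=
  ((Finset.Icc 1 (m - 1)).filter fun i => w (i + 1) < w i).card

/-- The number of ascents of a word of length `m`. -/
def ascW (m : ℕ) (w : ℕ → ℕ) : ℕ :=
  ((Finset.Icc 1 (m - 1)).filter fun i => w i < w (i + 1)).card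

/-- The number of non-descents of a word of length `m`. -/
def ndesW (m : ℕ) (w : ℕ → ℕ) : ℕ :=
  ((Finset.Icc 1 m).filter fun i => i = m ∨ w i < w (i + 1)).card

/-- The number of non-ascents of a word of length `m`. -/
def nascW (m : ℕ) (w : ℕ → ℕ) : ℕ :=
  ((Finset.Icc 1 m).filter fun i => i = m ∨ ¬ w i < w (i + 1)).card

/-- `π_e = π₂π₄⋯`, the subword of even-position entries, as a 1-based word. -/
def evenWord {N : ℕ} (π : Equiv.Perm (Fin N)) (j : ℕ) : ℕ := word π (2 * j)

/-- `π_o = π₁π₃⋯`, the subword of odd-position entries, as a 1-based word. -/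
def oddWord {N : ℕ} (π : Equiv.Perm (Fin N)) (j : ℕ) : ℕ := word π (2 * j - 1)

/-- A word of length `N` is alternating: `w₁ < w₂ > w₃ < w₄ > ⋯`. -/
def IsAltW (N : ℕ) (w : ℕ → ℕ) : Prop :=
  ∀ i ∈ Finset.Icc 1 (N - 1), (i % 2 = 1 → w i < w (i + 1)) ∧ (i % 2 = 0 → w (i + 1) < w i)

/-- A word of length `N` is reverse alternating: `w₁ > w₂ < w₃ > w₄ < ⋯`. -/
def IsRaltW (N : ℕ) (w : ℕ → ℕ) : Prop :=
  ∀ i ∈ Finset.Icc 1 (N - 1), (i % 2 = 1 → w (i + 1) < w i) ∧ (i % 2 = 0 → w i < w (i + 1))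

/-- `Alt_N`, the set of alternating permutations of `{1, …, N}`. -/
def altPerms (N : ℕ) : Finset (Equiv.Perm (Fin N)) :=
  Finset.univ.filter fun π => IsAltW N (word π)

/-- `Ralt_N`, the set of reverse alternating permutations of `{1, …, N}`. -/
def raltPerms (N : ℕ) : Finset (Equiv.Perm (Fin N)) :=
  Finset.univ.filter fun π => IsRaltW N (word π)

/-- `κ_N = (1)(2,3)(4,5)⋯`, acting on the 1-based values `{1, …, N}`. -/
def kappaNat (N j : ℕ) : ℕ :=
  if j % 2 = 0 ∧ 2 ≤ j ∧ j + 1 ≤ N then j + 1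
  else if j % 2 = 1 ∧ 3 ≤ j ∧ j ≤ N then j - 1
  else j

/-- `η_N = (1,2)(3,4)⋯`, acting on the 1-based values `{1, …, N}`. -/
def etaNat (N j : ℕ) : ℕ :=
  if j % 2 = 1 ∧ j + 1 ≤ N then j + 1
  else if j % 2 = 0 ∧ 2 ≤ j ∧ j ≤ N then j - 1
  else j

/-- `maj(π⁻¹)`. -/
def majInv (N : ℕ) (π : Equiv.Perm (Fin N)) : ℕ := majW N (word π.symm)

/-- `maj(κ_N π⁻¹)`. -/
def majKappaInv (N : ℕ) (π : Equiv.Perm (Fin N)) : ℕ :=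
  majW N fun i => kappaNat N (word π.symm i)

/-- `maj(η_N π⁻¹)`. -/
def majEtaInv (N : ℕ) (π : Equiv.Perm (Fin N)) : ℕ :=
  majW N fun i => etaNat N (word π.symm i)

/-- The reversal permutation `i ↦ N + 1 - i` of `Fin N`. -/
def revPerm (N : ℕ) : Equiv.Perm (Fin N) :=
  ⟨Fin.rev, Fin.rev, fun i => Fin.rev_rev i, fun i => Fin.rev_rev i⟩

/-- `φ(π)ᵢ = (N+1) - π_{N+1-i}`. -/
def phiMap {N : ℕ} (π : Equiv.Perm (Fin N)) : Equiv.Perm (Fin N) :=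
  ((revPerm N).trans π).trans (revPerm N)

/-! ### Lattice paths.

A path with `L` unit steps is encoded by `s : Fin L → Bool` (`true` = up-step `(1,1)`,
`false` = down-step `(1,-1)`). -/

/-- The vertical displacement of the `j`-th step. -/
def stepVal {L : ℕ} (s : Fin L → Bool) (j : ℕ) : ℤ :=
  if h : j < L then (if s ⟨j, h⟩ then 1 else -1) else 0

/-- The height of the path after `i` steps. -/
def pht {L : ℕ} (s : Fin L → Bool) (i : ℕ) : ℤ := ∑ j ∈ Finset.range i, stepVal s j

/-- A Dyck path: stays (weakly) above the `x`-axis and ends at height `0`. -/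
def IsDyck {L : ℕ} (s : Fin L → Bool) : Prop :=
  (∀ i ∈ Finset.range (L + 1), 0 ≤ pht s i) ∧ pht s L = 0

/-- The Dyck paths with `L` steps. -/
def dyckPaths (L : ℕ) : Finset (Fin L → Bool) := Finset.univ.filter fun s => IsDyck s

/-- The (indices of the) valleys of a path: a down-step followed by an up-step. -/
def valleys {L : ℕ} (s : Fin L → Bool) : Finset ℕ :=
  (Finset.Icc 1 (L - 1)).filter fun i => stepVal s (i - 1) = -1 ∧ stepVal s i = 1

/-- The (indices of the) peaks of a path: an up-step followed by a down-step. -/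
def peaks {L : ℕ} (s : Fin L → Bool) : Finset ℕ :=
  (Finset.Icc 1 (L - 1)).filter fun i => stepVal s (i - 1) = 1 ∧ stepVal s i = -1

/-- The (indices of the) high peaks of a path: peaks of height at least `2`. -/
def highPeaks {L : ℕ} (s : Fin L → Bool) : Finset ℕ :=
  (peaks s).filter fun i => 2 ≤ pht s i

/-- The height over abscissa `x` of a path starting at `(-m, 0)`. -/
def aht (m : ℕ) {L : ℕ} (s : Fin L → Bool) (x : ℤ) : ℤ := pht s (x + m).toNat

/-- `D₁ < D₂`, for `D₁` starting at `(-m₁,0)` and `D₂` at `(-m₂,0)`, `m₁ ≤ m₂`: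
strictly below on the common range of abscissas. -/
def PathLT (m₁ m₂ : ℕ) {L₁ L₂ : ℕ} (s₁ : Fin L₁ → Bool) (s₂ : Fin L₂ → Bool) : Prop :=
  ∀ x ∈ Finset.Icc (-(m₁ : ℤ)) (m₁ : ℤ), aht m₁ s₁ x < aht m₂ s₂ x

/-- `D₁ ≤ D₂`: weakly below, sharing no step. -/
def PathLE (m₁ m₂ : ℕ) {L₁ L₂ : ℕ} (s₁ : Fin L₁ → Bool) (s₂ : Fin L₂ → Bool) : Prop :=
  (∀ x ∈ Finset.Icc (-(m₁ : ℤ)) (m₁ : ℤ), aht m₁ s₁ x ≤ aht m₂ s₂ x) ∧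
    ∀ x ∈ Finset.Icc (-(m₁ : ℤ)) ((m₁ : ℤ) - 1),
      ¬(aht m₁ s₁ x = aht m₂ s₂ x ∧ aht m₁ s₁ (x + 1) = aht m₂ s₂ (x + 1))

/-- The abscissas of the common lattice points of two paths. -/
def interPts (m₁ m₂ : ℕ) {L₁ L₂ : ℕ} (s₁ : Fin L₁ → Bool) (s₂ : Fin L₂ → Bool) : Finset ℤ :=
  (Finset.Icc (-(m₁ : ℤ)) (m₁ : ℤ)).filter fun x => aht m₁ s₁ x = aht m₂ s₂ x

/-- `Dyck^k_{2n}`: tuples `(D₁, …, D_k)` with `D_i ∈ Dyck((-n-2i+2,0) → (n+2i-2,0))`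
(0-based: `D_i` has half-length `n + 2i`). -/
abbrev DyckTuple (n k : ℕ) := ∀ i : Fin k, Fin (2 * (n + 2 * (i : ℕ))) → Bool

/-- The tuples `(D₁ ≤ D₂ ≤ ⋯ ≤ D_k) ∈ Dyck^k_{2n}`. -/
def weakTuples (n k : ℕ) : Finset (DyckTuple n k) :=
  Finset.univ.filter fun D =>
    (∀ i : Fin k, IsDyck (D i)) ∧
      ∀ (i : ℕ) (h : i + 1 < k),
        PathLE (n + 2 * i) (n + 2 * (i + 1)) (D ⟨i, by omega⟩) (D ⟨i + 1, h⟩)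

/-- The tuples `(D₁ < D₂ < ⋯ < D_k) ∈ Dyck^k_{2n}`. -/
def strictTuples (n k : ℕ) : Finset (DyckTuple n k) :=
  Finset.univ.filter fun D =>
    (∀ i : Fin k, IsDyck (D i)) ∧
      ∀ (i : ℕ) (h : i + 1 < k),
        PathLT (n + 2 * i) (n + 2 * (i + 1)) (D ⟨i, by omega⟩) (D ⟨i + 1, h⟩)

/-- The lattice points of a path starting at `(-m, 0)`, as a finite subset of `ℤ × ℤ`. -/
def pathPoints (m : ℕ) {L : ℕ} (s : Fin L → Bool) : Finset (ℤ × ℤ) :=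
  (Finset.range (L + 1)).image fun t : ℕ => (-(m : ℤ) + (t : ℤ), pht s t)

/-- The non-valley lattice points of a path starting at `(-m, 0)`. -/
def nonValleyPoints (m : ℕ) {L : ℕ} (s : Fin L → Bool) : Finset (ℤ × ℤ) :=
  ((Finset.range (L + 1)).filter fun t => t ∉ valleys s).image
    fun t : ℕ => (-(m : ℤ) + (t : ℤ), pht s t)

section Weights

variable {F : Type*} [Field F]

/-- The `i`-th lattice point (in `ℤ × ℕ`) of a path starting at `(a, 0)`. -/
def ptOf (a : ℤ) {L : ℕ} (s : Fin L → Bool) (i : ℕ) : ℤ × ℕ := (a + i, (pht s i).toNat)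

/-- `wt_V(D) = ∏_{p ∈ D} wt(p) · ∏_{p ∈ V(D)} w̃t(p)` for a path starting at `(a, 0)`. -/
def wtVal (wt wte : ℤ × ℕ → F) (a : ℤ) {L : ℕ} (s : Fin L → Bool) : F :=
  (∏ i ∈ Finset.range (L + 1), wt (ptOf a s i)) * ∏ i ∈ valleys s, wte (ptOf a s i)

/-- `wt_HP(D) = ∏_{p ∈ D} wt(p) · ∏_{p ∈ HP(D)} w̃t(p)` for a path starting at `(a, 0)`. -/
def wtHigh (wt wte : ℤ × ℕ → F) (a : ℤ) {L : ℕ} (s : Fin L → Bool) : F :=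
  (∏ i ∈ Finset.range (L + 1), wt (ptOf a s i)) * ∏ i ∈ highPeaks s, wte (ptOf a s i)

/-- `∏_{p ∈ D₁ ∩ D₂} f(p)`, for `D₁` starting at `(-m₁,0)` and `D₂` at `(-m₂,0)`. -/
def interProd (f : ℤ × ℕ → F) (m₁ m₂ : ℕ) {L₁ L₂ : ℕ}
    (s₁ : Fin L₁ → Bool) (s₂ : Fin L₂ → Bool) : F :=
  ∏ x ∈ interPts m₁ m₂ s₁ s₂, f (x, (aht m₁ s₁ x).toNat)

/-- The sum over `(D₁ ≤ ⋯ ≤ D_k) ∈ Dyck^k_{2n}` of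
`wt_V(D₁)⋯wt_V(D_k) ∏_{i=1}^{k-1} ∏_{p ∈ D_i ∩ D_{i+1}} (1 - w̃t(p)⁻¹)`. -/
def weakSum (wt wte : ℤ × ℕ → F) (n k : ℕ) : F :=
  ∑ D ∈ weakTuples n k,
    (∏ i : Fin k, wtVal wt wte (-(n : ℤ) - 2 * (i : ℕ)) (D i)) *
      ∏ j : Fin (k - 1),
        interProd (fun p => 1 - (wte p)⁻¹) (n + 2 * (j : ℕ)) (n + 2 * ((j : ℕ) + 1))
          (D ⟨(j : ℕ), by have := j.isLt; omega⟩)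
          (D ⟨(j : ℕ) + 1, by have := j.isLt; omega⟩)

/-- The sum over `(D₁ < ⋯ < D_k) ∈ Dyck^k_{2n}` of `wt_V(D₁)⋯wt_V(D_k)`. -/
def strictSum (wt wte : ℤ × ℕ → F) (n k : ℕ) : F :=
  ∑ D ∈ strictTuples n k, ∏ i : Fin k, wtVal wt wte (-(n : ℤ) - 2 * (i : ℕ)) (D i)

end Weights

/-! ### Schröder paths.

A path with `L` steps is encoded by `st : Fin L → Fin 3`
(`0` = up-step `(1,1)`, `1` = down-step `(1,-1)`, `2` = horizontal step `(2,0)`). -/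

/-- The horizontal displacement of the `j`-th step. -/
def stepX {L : ℕ} (st : Fin L → Fin 3) (j : ℕ) : ℕ :=
  if h : j < L then (if st ⟨j, h⟩ = 2 then 2 else 1) else 0

/-- The vertical displacement of the `j`-th step. -/
def stepY {L : ℕ} (st : Fin L → Fin 3) (j : ℕ) : ℤ :=
  if h : j < L then (if st ⟨j, h⟩ = 0 then 1 else if st ⟨j, h⟩ = 1 then -1 else 0) else 0

/-- The horizontal position (relative to the start) after `j` steps. -/
def xpos {L : ℕ} (st : Fin L → Fin 3) (j : ℕ) : ℕ := ∑ t ∈ Finset.range j, stepX st t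

/-- The height after `j` steps. -/
def ypos {L : ℕ} (st : Fin L → Fin 3) (j : ℕ) : ℤ := ∑ t ∈ Finset.range j, stepY st t

/-- A (little) Schröder path of horizontal span `2m`: nonnegative heights, ends at
height `0`, and no horizontal step on the `x`-axis. -/
def IsSch (m : ℕ) {L : ℕ} (st : Fin L → Fin 3) : Prop :=
  xpos st L = 2 * m ∧ (∀ j ∈ Finset.range (L + 1), 0 ≤ ypos st j) ∧ ypos st L = 0 ∧
    ∀ j ∈ Finset.range L, stepX st j = 2 → ypos st j ≠ 0

/-- The height of a Schröder path over the relative abscissa `x` (midpoints of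
horizontal steps get the height of that horizontal step). -/
def schHeight {L : ℕ} (st : Fin L → Fin 3) (x : ℕ) : ℤ :=
  ∑ t ∈ Finset.range L, if xpos st (t + 1) ≤ x then stepY st t else 0

/-- The relative abscissa `x` is the midpoint of a horizontal step. -/
def IsHMid {L : ℕ} (st : Fin L → Fin 3) (x : ℕ) : Prop :=
  ∃ j ∈ Finset.range L, stepX st j = 2 ∧ xpos st j + 1 = x

/-- The number of horizontal steps of a Schröder path. -/
def hsCount {L : ℕ} (st : Fin L → Fin 3) : ℕ :=
  ((Finset.range L).filter fun j => stepX st j = 2).card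

/-- `wt_Sch(c, S) = c^{hs(S)} ∏_{p ∈ S} wt(p)` for a Schröder path starting at `(a,0)`. -/
def wtSch {F : Type*} [Field F] (wt : ℤ × ℕ → F) (c : F) (a : ℤ) {L : ℕ}
    (st : Fin L → Fin 3) : F :=
  c ^ hsCount st * ∏ j ∈ Finset.range (L + 1), wt (a + xpos st j, (ypos st j).toNat)

/-- `φ_V(S) = D`: the Dyck path `D` (with `L'` steps) is obtained from the Schröder
path `S` by replacing each horizontal step by a down-step followed by an up-step. -/
def PhiVEq {L L' : ℕ} (st : Fin L → Fin 3) (s : Fin L' → Bool) : Prop :=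
  ∀ x ∈ Finset.range (L' + 1),
    pht s x = schHeight st x - (if IsHMid st x then 1 else 0)

/-- `φ_HP(S) = D`: the Dyck path `D` is obtained from the Schröder path `S` by
replacing each horizontal step by an up-step followed by a down-step. -/
def PhiHPEq {L L' : ℕ} (st : Fin L → Fin 3) (s : Fin L' → Bool) : Prop :=
  ∀ x ∈ Finset.range (L' + 1),
    pht s x = schHeight st x + (if IsHMid st x then 1 else 0)

/-! ### Young diagrams, excited and pleasant diagrams, reverse plane partitions. -/

/-- The cells (1-based, matrix coordinates) of the staircase `δ_m = (m-1, m-2, …, 1)`. -/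
def deltaCells (m : ℕ) : Finset (ℕ × ℕ) :=
  ((Finset.Icc 1 m) ×ˢ (Finset.Icc 1 m)).filter fun c => c.1 + c.2 ≤ m

/-- An excited move inside the Young diagram `lam`. -/
def ExcitedStep (lam : Finset (ℕ × ℕ)) (D D' : Finset (ℕ × ℕ)) : Prop :=
  ∃ i j : ℕ, (i, j) ∈ D ∧ (i + 1, j) ∉ D ∧ (i, j + 1) ∉ D ∧ (i + 1, j + 1) ∉ D ∧
    (i + 1, j + 1) ∈ lam ∧ D' = insert (i + 1, j + 1) (D.erase (i, j))

/-- `D` is an excited diagram of `lam/mu`. -/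
def IsExcited (lam mu D : Finset (ℕ × ℕ)) : Prop :=
  Relation.ReflTransGen (ExcitedStep lam) mu D

/-- `P` is a pleasant diagram of `lam/mu`: a subset of `lam \ D` for an excited diagram `D`. -/
def IsPleasant (lam mu : Finset (ℕ × ℕ)) (P : Finset (ℕ × ℕ)) : Prop :=
  ∃ D, IsExcited lam mu D ∧ P ⊆ lam \ D

/-- `p(lam/mu)`, the number of pleasant diagrams of `lam/mu`. -/
def pleasantCount (lam mu : Finset (ℕ × ℕ)) : ℕ :=
  Set.ncard {P : Finset (ℕ × ℕ) | IsPleasant lam mu P}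

/-- A reverse plane partition on the skew shape `shape`: a filling by nonnegative
integers (vanishing off the shape) weakly increasing along rows and columns. -/
def IsRPP (shape : Finset (ℕ × ℕ)) (f : ℕ × ℕ → ℕ) : Prop :=
  (∀ c, c ∉ shape → f c = 0) ∧
    (∀ i j : ℕ, (i, j) ∈ shape → (i, j + 1) ∈ shape → f (i, j) ≤ f (i, j + 1)) ∧
    ∀ i j : ℕ, (i, j) ∈ shape → (i + 1, j) ∈ shape → f (i, j) ≤ f (i + 1, j)

/-- `∑_{π ∈ RPP(shape)} q^{|π|}` as a formal power series in `q`. -/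
def rppGF (shape : Finset (ℕ × ℕ)) : PowerSeries ℚ :=
  PowerSeries.mk fun N =>
    (Set.ncard {f : ℕ × ℕ → ℕ | IsRPP shape f ∧ ∑ c ∈ shape, f c = N} : ℚ)

/-- `(q; q)_m = ∏_{i=1}^m (1 - q^i)` as a formal power series. -/
def pochPS (m : ℕ) : PowerSeries ℚ :=
  ∏ i ∈ Finset.Icc 1 m, (1 - (PowerSeries.X : PowerSeries ℚ) ^ i)

/-- `E*_N(q) = ∑_{π ∈ Alt_N} q^{maj(κ_N π⁻¹)}` as a formal power series. -/
def EstarPS (N : ℕ) : PowerSeries ℚ :=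
  ∑ π ∈ altPerms N, (PowerSeries.X : PowerSeries ℚ) ^ majKappaInv N π

/-- `E*_m(q)/(q;q)_m` for `m ≥ 0`, and `0` for `m < 0`. -/
def EstarEntry (m : ℤ) : PowerSeries ℚ :=
  if m < 0 then 0 else EstarPS m.toNat * (pochPS m.toNat)⁻¹

/-- The Gaussian binomial coefficient `[N choose M]_q` as a formal power series. -/
def gaussPS (N M : ℕ) : PowerSeries ℚ :=
  pochPS N * (pochPS M * pochPS (N - M))⁻¹

/-! For a path `D` above `C`, expand the product of `w̃t` over the valleys of `D` times the product
of `1 - w̃t⁻¹` over the points of `C ∩ D`: it is the sum, over the sets `H` of valleys of `D` that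
contain `C ∩ D`, of the products of `w̃t - 1` over `H`. Raising the valleys in `H` by two turns
them into peaks, preserves the total weight because `wt · (w̃t - 1)` does not change, turns `C ≤ D`
with `C ∩ D ⊆ H` into `C < E`, and turns `D < G` into `E ≤ G` with `E ∩ G ⊆ H`. Hence a weak step
followed by a strict one can be exchanged for a strict step followed by a weak one, at the price of
weighting the peaks instead of the valleys of the middle path. For `w̃t = q ^ (2 ht + 1)` these two
weights differ by the factor `q ^ (2 m + 1)`, where `m` is the half-length of the path. Moving all
weak steps to the end of the tuple, where they can be replaced by strict ones, gives the theorem.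
-/

/-! ### Height functions of Dyck paths -/

section Heights

variable {L : ℕ} (s : Fin L → Bool)

theorem pht_succ (t : ℕ) : pht s (t + 1) = pht s t + stepVal s t :=
  Finset.sum_range_succ _ _

theorem stepVal_eq_ite (j : Fin L) : stepVal s j = if s j then 1 else -1 :=
  dif_pos j.isLt

theorem pht_of_le {t : ℕ} (ht : L ≤ t) : pht s t = pht s L := by
  induction t, ht using Nat.le_induction with
  | base => rfl
  | succ t ht ih => rw [pht_succ, ih, stepVal, dif_neg ht.not_gt, add_zero]

end Heights

/-- The set `Dyck((-m, 0) → (m, 0))`. -/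
abbrev DyckPath (m : ℕ) := {s : Fin (2 * m) → Bool // IsDyck s}

/-- The height functions of the paths in `Dyck((-m, 0) → (m, 0))`, extended by zero to all
abscissas. -/
structure IsDyckProfile (m : ℕ) (f : ℤ → ℤ) : Prop where
  nonneg : ∀ x, 0 ≤ f x
  eq_zero : ∀ x, x ≤ -(m : ℤ) ∨ (m : ℤ) ≤ x → f x = 0
  step : ∀ x, -(m : ℤ) ≤ x → x < m → f (x + 1) = f x + 1 ∨ f (x + 1) = f x - 1

theorem IsDyckProfile.two_dvd {m : ℕ} {f : ℤ → ℤ} (hf : IsDyckProfile m f) {x : ℤ}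
    (hx : -(m : ℤ) ≤ x) (hx' : x ≤ m) : 2 ∣ f x - (x + m) := by
  induction x, hx using Int.leInduction with
  | base => simp [hf.eq_zero (-m) (.inl le_rfl)]
  | succ x hx ih =>
    have hstep := hf.step x hx (by omega)
    have := ih (by omega)
    omega

theorem IsDyckProfile.le_sub_abs {m : ℕ} {f : ℤ → ℤ} (hf : IsDyckProfile m f) {x : ℤ}
    (hx : -(m : ℤ) ≤ x) (hx' : x ≤ m) : f x ≤ m - |x| := by
  have hleft : f x ≤ m + x := by
    induction x, hx using Int.leInduction with
    | base => simp [hf.eq_zero (-m) (.inl le_rfl)]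
    | succ x hx ih =>
      have := hf.step x hx (by omega)
      have := ih (by omega)
      omega
  have hright : f x ≤ m - x := by
    clear hleft
    induction x, hx' using Int.leInductionDown with
    | base => simp [hf.eq_zero m (.inr le_rfl)]
    | pred x hx' ih =>
      have := hf.step (x - 1) hx (by omega)
      have := ih (by omega)
      rw [sub_add_cancel] at *
      omega
  grind

namespace DyckPath

variable {m : ℕ}

/-- The height of a path over the abscissa `x`, which is zero outside the range of the path. -/
def ht (D : DyckPath m) (x : ℤ) : ℤ := aht m D.1 x

theorem ht_sub (D : DyckPath m) (t : ℕ) : D.ht (t - m) = pht D.1 t := by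
  simp [ht, aht]

theorem ht_sub_add_one (D : DyckPath m) (t : ℕ) :
    D.ht (t - m + 1) = D.ht (t - m) + stepVal D.1 t := by
  rw [ht_sub, ← pht_succ, ← ht_sub, Nat.cast_succ, sub_add_eq_add_sub]

theorem isDyckProfile_ht (D : DyckPath m) : IsDyckProfile m D.ht where
  nonneg x := by
    rcases le_total (x + m).toNat (2 * m) with h | h
    · exact D.2.1 _ (Finset.mem_range_succ_iff.2 h)
    · exact (pht_of_le D.1 h).trans D.2.2 |>.ge
  eq_zero x hx := by
    rcases hx with hx | hx
    · simp [ht, aht, pht, Int.toNat_of_nonpos (show x + m ≤ 0 by omega)]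
    · exact (pht_of_le D.1 (by omega)).trans D.2.2
  step x hx hx' := by
    have h := D.ht_sub_add_one (x + m).toNat
    rw [stepVal_eq_ite D.1 ⟨(x + m).toNat, by omega⟩,
      show ((x + m).toNat : ℤ) - m = x by omega] at h
    split_ifs at h <;> omega

theorem ht_injective : Function.Injective (ht : DyckPath m → ℤ → ℤ) := by
  intro D E h
  refine Subtype.ext (funext fun j => ?_)
  have hD := D.ht_sub_add_one j
  have hE := E.ht_sub_add_one j
  rw [stepVal_eq_ite] at hD hE
  rw [h] at hD
  grind

theorem exists_ht_eq {f : ℤ → ℤ} (hf : IsDyckProfile m f) : ∃ D : DyckPath m, D.ht = f := by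
  let s : Fin (2 * m) → Bool := fun j => f (j - m) < f (j - m + 1)
  have hs : ∀ t ≤ 2 * m, pht s t = f (t - m) := by
    intro t ht
    induction t with
    | zero => simp [pht, hf.eq_zero (-m) (.inl le_rfl)]
    | succ t ih =>
      have hstep := hf.step (t - m) (by omega) (by omega)
      rw [pht_succ, ih (by omega), stepVal_eq_ite s ⟨t, ht⟩]
      simp only [s, decide_eq_true_eq, Nat.cast_add, Nat.cast_one, add_sub_right_comm]
      split_ifs <;> omega
  have hDyck : IsDyck s := by
    refine ⟨fun t ht => ?_, ?_⟩
    · rw [hs t (Finset.mem_range_succ_iff.1 ht)]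
      exact hf.nonneg _
    · rw [hs _ le_rfl]
      exact hf.eq_zero _ (.inr (by omega))
  refine ⟨⟨s, hDyck⟩, funext fun x => ?_⟩
  by_cases hx : x ≤ -(m : ℤ) ∨ (m : ℤ) ≤ x
  · rw [hf.eq_zero x hx, (isDyckProfile_ht _).eq_zero x hx]
  · rw [ht, aht, hs _ (by omega)]
    congr 1
    omega

/-- The abscissas of the valleys of a path. -/
def valleyAbscissas (D : DyckPath m) : Finset ℤ :=
  {x ∈ Finset.Icc (-(m : ℤ)) m | D.ht (x - 1) = D.ht x + 1 ∧ D.ht (x + 1) = D.ht x + 1}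

/-- The abscissas of the peaks of a path. -/
def peakAbscissas (D : DyckPath m) : Finset ℤ :=
  {x ∈ Finset.Icc (-(m : ℤ)) m | D.ht (x - 1) = D.ht x - 1 ∧ D.ht (x + 1) = D.ht x - 1}

theorem mem_valleyAbscissas {D : DyckPath m} {x : ℤ} :
    x ∈ D.valleyAbscissas ↔ D.ht (x - 1) = D.ht x + 1 ∧ D.ht (x + 1) = D.ht x + 1 := by
  have := D.isDyckProfile_ht.eq_zero
  grind [valleyAbscissas]

theorem mem_peakAbscissas {D : DyckPath m} {x : ℤ} :
    x ∈ D.peakAbscissas ↔ D.ht (x - 1) = D.ht x - 1 ∧ D.ht (x + 1) = D.ht x - 1 := by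
  have := D.isDyckProfile_ht.eq_zero
  grind [peakAbscissas]

section Comparison

variable {m' : ℕ} {D : DyckPath m} {E : DyckPath m'}

theorem pathLT_iff :
    PathLT m m' D.1 E.1 ↔ ∀ x : ℤ, -m ≤ x → x ≤ m → D.ht x < E.ht x := by
  simp [PathLT, ht]

theorem pathLE_iff :
    PathLE m m' D.1 E.1 ↔ (∀ x : ℤ, -m ≤ x → x ≤ m → D.ht x ≤ E.ht x) ∧
      ∀ x : ℤ, -m ≤ x → x < m → ¬(D.ht x = E.ht x ∧ D.ht (x + 1) = E.ht (x + 1)) := by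
  simp [PathLE, ht]

theorem mem_interPts {x : ℤ} :
    x ∈ interPts m m' D.1 E.1 ↔ (-m ≤ x ∧ x ≤ m) ∧ D.ht x = E.ht x := by
  simp [interPts, ht]

end Comparison

theorem interPts_subset_valleyAbscissas {D : DyckPath m} {E : DyckPath (m + 2)}
    (h : PathLE m (m + 2) D.1 E.1) : interPts m (m + 2) D.1 E.1 ⊆ E.valleyAbscissas := by
  intro x hx
  rw [mem_interPts] at hx
  obtain ⟨hle, hne⟩ := pathLE_iff.1 h
  have := D.isDyckProfile_ht.eq_zero x
  have := E.isDyckProfile_ht.nonneg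
  have := E.isDyckProfile_ht.step (x - 1)
  have := E.isDyckProfile_ht.step x
  have := D.isDyckProfile_ht.step (x - 1)
  have := D.isDyckProfile_ht.step x
  rw [mem_valleyAbscissas]
  grind

theorem interPts_subset_peakAbscissas (hm : 0 < m) {D : DyckPath m} {E : DyckPath (m + 2)}
    (h : PathLE m (m + 2) D.1 E.1) : interPts m (m + 2) D.1 E.1 ⊆ D.peakAbscissas := by
  intro x hx
  rw [mem_interPts] at hx
  obtain ⟨hle, hne⟩ := pathLE_iff.1 h
  have := D.isDyckProfile_ht.eq_zero
  have := D.isDyckProfile_ht.nonneg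
  have := E.isDyckProfile_ht.step (x - 1)
  have := E.isDyckProfile_ht.step x
  have := D.isDyckProfile_ht.step (x - 1)
  have := D.isDyckProfile_ht.step x
  rw [mem_peakAbscissas]
  grind

theorem two_le_ht_of_pathLT {D : DyckPath m} {E : DyckPath (m + 2)}
    (h : PathLT m (m + 2) D.1 E.1) {x : ℤ} (hx : x ∈ E.peakAbscissas) : 2 ≤ E.ht x := by
  have hlt := pathLT_iff.1 h
  have hD := D.isDyckProfile_ht
  have hE := E.isDyckProfile_ht
  obtain ⟨hpred, hsucc⟩ := mem_peakAbscissas.1 hx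
  by_cases hrange : -(m : ℤ) ≤ x ∧ x ≤ m
  · have := hlt x hrange.1 hrange.2
    have := hD.nonneg x
    have := hD.two_dvd hrange.1 hrange.2
    have := hE.two_dvd (x := x) (by omega) (by omega)
    omega
  · have := hlt (x - 1)
    have := hlt (x + 1)
    have := hD.nonneg (x - 1)
    have := hD.nonneg (x + 1)
    have := hE.nonneg (x - 1)
    have := hE.eq_zero x
    omega

/-! ### Raising valleys to peaks -/

/-- The path `E` arises from `D` by raising its valleys over `H` by two, which makes them peaks. -/
structure IsRaise (D E : DyckPath m) (H : Finset ℤ) : Prop where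
  subset_valleyAbscissas : H ⊆ D.valleyAbscissas
  subset_peakAbscissas : H ⊆ E.peakAbscissas
  ht_eq : ∀ x, E.ht x = D.ht x + if x ∈ H then 2 else 0

theorem exists_isRaise {D : DyckPath m} {H : Finset ℤ} (hH : H ⊆ D.valleyAbscissas) :
    ∃ E, IsRaise D E H := by
  have hD := D.isDyckProfile_ht
  have hvalley : ∀ x ∈ H, D.ht (x - 1) = D.ht x + 1 ∧ D.ht (x + 1) = D.ht x + 1 :=
    fun x hx => mem_valleyAbscissas.1 (hH hx)
  obtain ⟨E, hE⟩ := exists_ht_eq (m := m) (f := fun x => D.ht x + if x ∈ H then 2 else 0)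
    { nonneg := fun x => add_nonneg (hD.nonneg x) (by grind)
      eq_zero := by grind [hD.eq_zero]
      step := by grind [hD.step] }
  refine ⟨E, hH, fun x hx => ?_, congrFun hE⟩
  simp only [mem_peakAbscissas, hE]
  grind

theorem exists_isRaise_of_two_le {E : DyckPath m} {H : Finset ℤ} (hH : H ⊆ E.peakAbscissas)
    (htwo : ∀ x ∈ H, 2 ≤ E.ht x) : ∃ D, IsRaise D E H := by
  have hE := E.isDyckProfile_ht
  have hpeak : ∀ x ∈ H, E.ht (x - 1) = E.ht x - 1 ∧ E.ht (x + 1) = E.ht x - 1 :=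
    fun x hx => mem_peakAbscissas.1 (hH hx)
  obtain ⟨D, hD⟩ := exists_ht_eq (m := m) (f := fun x => E.ht x - if x ∈ H then 2 else 0)
    { nonneg := fun x => by grind [hE.nonneg x]
      eq_zero := by grind [hE.eq_zero]
      step := by grind [hE.step] }
  refine ⟨D, fun x hx => ?_, hH, fun x => by simp [hD]⟩
  simp only [mem_valleyAbscissas, hD]
  grind

namespace IsRaise

variable {D D' E E' : DyckPath m} {H : Finset ℤ}

theorem eq_left (h : IsRaise D E H) (h' : IsRaise D' E H) : D = D' :=
  ht_injective (funext fun x => add_right_cancel ((h.ht_eq x).symm.trans (h'.ht_eq x)))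

theorem eq_right (h : IsRaise D E H) (h' : IsRaise D E' H) : E = E' :=
  ht_injective (funext fun x => (h.ht_eq x).trans (h'.ht_eq x).symm)

theorem pathLE_and_subset_iff_left {C : DyckPath m} {D E : DyckPath (m + 2)}
    (h : IsRaise D E H) :
    PathLE m (m + 2) C.1 D.1 ∧ interPts m (m + 2) C.1 D.1 ⊆ H ↔ PathLT m (m + 2) C.1 E.1 := by
  have hvalley : ∀ x ∈ H, D.ht (x - 1) = D.ht x + 1 ∧ D.ht (x + 1) = D.ht x + 1 :=
    fun x hx => mem_valleyAbscissas.1 (h.subset_valleyAbscissas hx)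
  have hC (x : ℤ) := C.isDyckProfile_ht.two_dvd (x := x)
  have hD (x : ℤ) := D.isDyckProfile_ht.two_dvd (x := x)
  have hE := h.ht_eq
  simp only [pathLE_iff, pathLT_iff, subset_iff, mem_interPts]
  constructor
  · grind
  · intro hlt
    refine ⟨⟨fun x hx hx' => ?_, fun x hx hx' => ?_⟩, ?_⟩
    · have := hlt x hx hx'
      have := hC x hx hx'
      have := hD x (by omega) (by omega)
      grind
    · grind
    · grind

theorem pathLE_and_subset_iff_right {F : DyckPath (m + 2)} (h : IsRaise D E H) :
    PathLE m (m + 2) E.1 F.1 ∧ interPts m (m + 2) E.1 F.1 ⊆ H ↔ PathLT m (m + 2) D.1 F.1 := by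
  have hpeak : ∀ x ∈ H, E.ht (x - 1) = E.ht x - 1 ∧ E.ht (x + 1) = E.ht x - 1 :=
    fun x hx => mem_peakAbscissas.1 (h.subset_peakAbscissas hx)
  have hD (x : ℤ) := D.isDyckProfile_ht.two_dvd (x := x)
  have hF (x : ℤ) := F.isDyckProfile_ht.two_dvd (x := x)
  have hE := h.ht_eq
  simp only [pathLE_iff, pathLT_iff, subset_iff, mem_interPts]
  constructor
  · grind
  · intro hlt
    refine ⟨⟨fun x hx hx' => ?_, fun x hx hx' => ?_⟩, ?_⟩
    · have := hlt x hx hx'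
      have := hD x hx hx'
      have := hF x (by omega) (by omega)
      grind
    · grind
    · grind

end IsRaise

theorem two_mul_sum_peak_sub_valley (D : DyckPath m) {x : ℤ} (hx : -(m : ℤ) ≤ x) (hx' : x < m) :
    2 * ∑ y ∈ Finset.Icc (-(m : ℤ)) x,
        ((if y ∈ D.peakAbscissas then 2 * D.ht y + 1 else 0) -
          if y ∈ D.valleyAbscissas then 2 * D.ht y + 1 else 0) =
      2 * (x + m) + 1 - (D.ht (x + 1) - D.ht x) * (2 * D.ht x + 1) := by
  have hD := D.isDyckProfile_ht
  induction x, hx using Int.leInduction with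
  | base =>
    have hzero := hD.eq_zero (-m) (.inl le_rfl)
    have hnonneg := hD.nonneg (-m + 1)
    have hstep := hD.step (-m) le_rfl hx'
    have hpred := hD.eq_zero (-m - 1) (by omega)
    simp only [Icc_self, sum_singleton, mem_peakAbscissas, mem_valleyAbscissas]
    grind
  | succ x hx ih =>
    have hstep := hD.step x hx (by omega)
    have hstep' := hD.step (x + 1) (by omega) hx'
    rw [← Finset.insert_Icc_right_eq_Icc_add_one (by omega), sum_insert (by simp), mul_add,
      ih (by omega)]
    simp only [mem_peakAbscissas, mem_valleyAbscissas, add_sub_cancel_right]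
    grind

theorem sum_peakAbscissas (hm : 0 < m) (D : DyckPath m) :
    ∑ x ∈ D.peakAbscissas, (2 * D.ht x + 1) =
      2 * m + 1 + ∑ x ∈ D.valleyAbscissas, (2 * D.ht x + 1) := by
  have hD := D.isDyckProfile_ht
  have hpred := hD.step (m - 1) (by omega) (by omega)
  have hnonneg := hD.nonneg (m - 1)
  have hlast := hD.eq_zero m (.inr le_rfl)
  have hsucc := hD.eq_zero (m + 1) (by omega)
  have hsum := D.two_mul_sum_peak_sub_valley (x := m - 1) (by omega) (by omega)
  rw [sub_add_cancel, hlast] at hsum hpred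
  have hht : D.ht (m - 1) = 1 := by omega
  have hpeak : (m : ℤ) ∉ D.peakAbscissas := by rw [mem_peakAbscissas]; omega
  have hvalley : (m : ℤ) ∉ D.valleyAbscissas := by rw [mem_valleyAbscissas]; omega
  have hsubset {V : Finset ℤ} (hmV : (m : ℤ) ∉ V) (hV : V ⊆ Finset.Icc (-(m : ℤ)) m) :
      ∑ x ∈ V, (2 * D.ht x + 1) =
        ∑ x ∈ Finset.Icc (-(m : ℤ)) (m - 1), if x ∈ V then 2 * D.ht x + 1 else 0 := by
    rw [← sum_filter]
    refine sum_congr ?_ fun _ _ => rfl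
    grind
  rw [hsubset hpeak (filter_subset _ _), hsubset hvalley (filter_subset _ _)]
  rw [sum_sub_distrib, hht] at hsum
  linarith

end DyckPath

section Weights

variable {F : Type*} [Field F]

theorem sum_Icc_prod_sub_one {ι : Type*} [DecidableEq ι] {I V : Finset ι} (h : I ⊆ V) {a : ι → F}
    (ha : ∀ x ∈ I, a x ≠ 0) :
    ∑ H ∈ Finset.Icc I V, ∏ x ∈ H, (a x - 1) = (∏ x ∈ V, a x) * ∏ x ∈ I, (1 - (a x)⁻¹) := by
  have hdisj : ∀ J ∈ (V \ I).powerset, Disjoint I J := fun J hJ =>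
    disjoint_sdiff.mono_right (mem_powerset.1 hJ)
  have hinj : Set.InjOn (I ∪ ·) ((V \ I).powerset : Set (Finset ι)) :=
    Set.LeftInvOn.injOn (f₁' := (· \ I)) fun J hJ => union_sdiff_cancel_left (hdisj J hJ)
  calc ∑ H ∈ Finset.Icc I V, ∏ x ∈ H, (a x - 1)
      = ∑ J ∈ (V \ I).powerset, (∏ x ∈ I, (a x - 1)) * ∏ x ∈ J, (a x - 1) := by
        rw [Icc_eq_image_powerset h, sum_image hinj]
        exact sum_congr rfl fun J hJ => prod_union (hdisj J hJ)
    _ = (∏ x ∈ I, (a x - 1)) * ∏ x ∈ V \ I, a x := by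
        simp only [← mul_sum, ← prod_add_one, sub_add_cancel]
    _ = (∏ x ∈ I, a x * (1 - (a x)⁻¹)) * ∏ x ∈ V \ I, a x := by
        congr 1
        refine prod_congr rfl fun x hx => ?_
        rw [mul_sub, mul_inv_cancel₀ (ha x hx), mul_one]
    _ = (∏ x ∈ V, a x) * ∏ x ∈ I, (1 - (a x)⁻¹) := by
        rw [prod_mul_distrib, ← prod_sdiff h]
        ring

namespace DyckPath

variable {m : ℕ}

/-- The lattice point of a path over the abscissa `x`. -/
def pt (D : DyckPath m) (x : ℤ) : ℤ × ℕ := (x, (D.ht x).toNat)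

/-- The weight `∏_{p ∈ D} wt(p) · ∏_{p ∈ V} w̃t(p)` of a path `D`, where `V` is given by its
abscissas. -/
def weight (wt wte : ℤ × ℕ → F) (D : DyckPath m) (V : Finset ℤ) : F :=
  (∏ x ∈ Finset.Icc (-(m : ℤ)) m, wt (D.pt x)) * ∏ x ∈ V, wte (D.pt x)

theorem ptOf_eq_pt (D : DyckPath m) (t : ℕ) : ptOf (-m) D.1 t = D.pt (t - m) := by
  rw [ptOf, pt, ht_sub, neg_add_eq_sub]

theorem mem_valleys_iff (D : DyckPath m) (t : ℕ) :
    t ∈ valleys D.1 ↔ (t - m : ℤ) ∈ D.valleyAbscissas := by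
  have hD := D.isDyckProfile_ht
  rcases t with _ | t
  · have hzero := hD.eq_zero (-m - 1) (by omega)
    have hzero' := hD.eq_zero (-m) (by omega)
    simp [valleys, mem_valleyAbscissas, hzero, hzero']
  · have hpred := D.ht_sub_add_one t
    have hsucc := D.ht_sub_add_one (t + 1)
    have hlast := hD.eq_zero (t + 1 - m)
    have hlast' := hD.eq_zero (t + 1 - m + 1)
    rw [valleys, mem_filter, mem_Icc, mem_valleyAbscissas, Nat.add_sub_cancel]
    push_cast at hsucc ⊢
    grind

theorem wtVal_eq_weight (wt wte : ℤ × ℕ → F) (D : DyckPath m) :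
    wtVal wt wte (-m) D.1 = D.weight wt wte D.valleyAbscissas := by
  have hrange {x : ℤ} (hx : x ∈ D.valleyAbscissas) := Finset.mem_Icc.1 (Finset.mem_filter.1 hx).1
  simp only [wtVal, weight, ptOf_eq_pt]
  congr 1
  · refine prod_nbij' (fun t => (t : ℤ) - m) (fun x => (x + m).toNat) ?_ ?_ ?_ ?_ fun _ _ => rfl
    all_goals grind
  · refine prod_nbij' (fun t => (t : ℤ) - m) (fun x => (x + m).toNat) ?_ ?_ ?_ ?_ fun _ _ => rfl
    · simp [mem_valleys_iff]
    · intro x hx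
      rw [mem_valleys_iff]
      grind
    · simp
    · grind

variable {wt wte : ℤ × ℕ → F}

theorem weight_peakAbscissas {E : DyckPath m} {a : F}
    (ha : ∏ x ∈ E.peakAbscissas, wte (E.pt x) = a * ∏ x ∈ E.valleyAbscissas, wte (E.pt x)) :
    E.weight wt wte E.peakAbscissas = a * E.weight wt wte E.valleyAbscissas := by
  rw [weight, ha, weight, mul_left_comm]

/-- The weight of a path in which each point over `H` carries the additional factor `w̃t - 1`. -/
def markedWeight (wt wte : ℤ × ℕ → F) (D : DyckPath m) (H : Finset ℤ) : F :=
  (∏ x ∈ Finset.Icc (-(m : ℤ)) m, wt (D.pt x)) * ∏ x ∈ H, (wte (D.pt x) - 1)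

theorem weight_mul_prod_one_sub_inv (hwte : ∀ p, wte p ≠ 0) (D : DyckPath m) {I V : Finset ℤ}
    (h : I ⊆ V) :
    D.weight wt wte V * ∏ x ∈ I, (1 - (wte (D.pt x))⁻¹) =
      ∑ H ∈ Finset.Icc I V, D.markedWeight wt wte H := by
  simp only [weight, markedWeight, ← mul_sum, sum_Icc_prod_sub_one h fun x _ => hwte (D.pt x),
    mul_assoc]

theorem IsRaise.markedWeight_eq
    (hinv : ∀ x h, wt (x, h + 2) * (wte (x, h + 2) - 1) = wt (x, h) * (wte (x, h) - 1))
    {D E : DyckPath m} {H : Finset ℤ} (h : IsRaise D E H) :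
    D.markedWeight wt wte H = E.markedWeight wt wte H := by
  have hH : H ⊆ Finset.Icc (-(m : ℤ)) m := h.subset_valleyAbscissas.trans (filter_subset _ _)
  have hpt (x : ℤ) : E.pt x = if x ∈ H then (x, (D.ht x).toNat + 2) else D.pt x := by
    have := D.isDyckProfile_ht.nonneg x
    rw [pt, pt, h.ht_eq]
    grind
  simp only [markedWeight, ← prod_sdiff hH, mul_assoc, ← prod_mul_distrib]
  congr 1 <;> refine prod_congr rfl fun x hx => ?_
  · rw [hpt, if_neg (mem_sdiff.1 hx).2]
  · rw [hpt, if_pos hx, hinv, pt]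

/-! ### Exchanging weak and strict steps -/

section Exchange

variable {m' : ℕ}

/-- The factor of a consecutive pair of paths in the sum over weakly increasing tuples. -/
def weakStep (wte : ℤ × ℕ → F) (D : DyckPath m) (E : DyckPath m') : F :=
  if PathLE m m' D.1 E.1 then interProd (fun p => 1 - (wte p)⁻¹) m m' D.1 E.1 else 0

/-- The factor of a consecutive pair of paths in the sum over strictly increasing tuples. -/
def strictStep (F : Type*) [Field F] (D : DyckPath m) (E : DyckPath m') : F :=
  if PathLT m m' D.1 E.1 then 1 else 0

theorem interProd_eq_left (f : ℤ × ℕ → F) (D : DyckPath m) (E : DyckPath m') :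
    interProd f m m' D.1 E.1 = ∏ x ∈ interPts m m' D.1 E.1, f (D.pt x) :=
  rfl

theorem interProd_eq_right (f : ℤ × ℕ → F) (D : DyckPath m) (E : DyckPath m') :
    interProd f m m' D.1 E.1 = ∏ x ∈ interPts m m' D.1 E.1, f (E.pt x) :=
  prod_congr rfl fun x hx => by rw [pt, ← (mem_interPts.1 hx).2, ht]

/-- The pairs of a path `D` between `C` and `G` and a set `H` of valleys of `D` that contains
all points of contact with `C`. -/
def valleyMarkings (C : DyckPath m) (G : DyckPath (m + 2 + 2)) :
    Finset (Σ _ : DyckPath (m + 2), Finset ℤ) :=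
  Finset.sigma {D | PathLE m (m + 2) C.1 D.1 ∧ PathLT (m + 2) (m + 2 + 2) D.1 G.1} fun D =>
    Finset.Icc (interPts m (m + 2) C.1 D.1) D.valleyAbscissas

/-- The pairs of a path `E` between `C` and `G` and a set `H` of peaks of `E` that contains
all points of contact with `G`. -/
def peakMarkings (C : DyckPath m) (G : DyckPath (m + 2 + 2)) :
    Finset (Σ _ : DyckPath (m + 2), Finset ℤ) :=
  Finset.sigma {E | PathLT m (m + 2) C.1 E.1 ∧ PathLE (m + 2) (m + 2 + 2) E.1 G.1} fun E =>
    Finset.Icc (interPts (m + 2) (m + 2 + 2) E.1 G.1) E.peakAbscissas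

theorem sum_valleyMarkings (hwte : ∀ p, wte p ≠ 0) (C : DyckPath m) (G : DyckPath (m + 2 + 2)) :
    ∑ p ∈ valleyMarkings C G, p.1.markedWeight wt wte p.2 =
      ∑ D : DyckPath (m + 2),
        weakStep wte C D * D.weight wt wte D.valleyAbscissas * strictStep F D G := by
  rw [valleyMarkings, sum_sigma, sum_filter]
  refine sum_congr rfl fun D _ => ?_
  by_cases hCD : PathLE m (m + 2) C.1 D.1
  · by_cases hDG : PathLT (m + 2) (m + 2 + 2) D.1 G.1
    · rw [if_pos ⟨hCD, hDG⟩, weakStep, if_pos hCD, strictStep, if_pos hDG, interProd_eq_right,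
        ← weight_mul_prod_one_sub_inv hwte D (interPts_subset_valleyAbscissas hCD), mul_one,
        mul_comm]
    · simp [strictStep, hDG]
  · simp [weakStep, hCD]

theorem sum_peakMarkings (hwte : ∀ p, wte p ≠ 0) (C : DyckPath m) (G : DyckPath (m + 2 + 2)) :
    ∑ p ∈ peakMarkings C G, p.1.markedWeight wt wte p.2 =
      ∑ E : DyckPath (m + 2),
        strictStep F C E * E.weight wt wte E.peakAbscissas * weakStep wte E G := by
  rw [peakMarkings, sum_sigma, sum_filter]
  refine sum_congr rfl fun E _ => ?_
  by_cases hEG : PathLE (m + 2) (m + 2 + 2) E.1 G.1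
  · by_cases hCE : PathLT m (m + 2) C.1 E.1
    · rw [if_pos ⟨hCE, hEG⟩, weakStep, if_pos hEG, strictStep, if_pos hCE, interProd_eq_left,
        ← weight_mul_prod_one_sub_inv hwte E
          (interPts_subset_peakAbscissas (Nat.succ_pos _) hEG), one_mul]
    · simp [strictStep, hCE]
  · simp [weakStep, hEG]

theorem mem_valleyMarkings_iff_mem_peakMarkings {C : DyckPath m} {G : DyckPath (m + 2 + 2)}
    {D E : DyckPath (m + 2)} {H : Finset ℤ} (h : IsRaise D E H) :
    (⟨D, H⟩ : Σ _ : DyckPath (m + 2), Finset ℤ) ∈ valleyMarkings C G ↔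
      (⟨E, H⟩ : Σ _ : DyckPath (m + 2), Finset ℤ) ∈ peakMarkings C G := by
  have hC := h.pathLE_and_subset_iff_left (C := C)
  have hG := h.pathLE_and_subset_iff_right (F := G)
  have hD := h.subset_valleyAbscissas
  have hE := h.subset_peakAbscissas
  simp only [valleyMarkings, peakMarkings, mem_sigma, mem_filter, mem_univ, true_and,
    Finset.mem_Icc]
  tauto

/-- Raising the marked valleys is a weight-preserving bijection between the two markings. -/
theorem sum_valleyMarkings_eq_sum_peakMarkings
    (hinv : ∀ x h, wt (x, h + 2) * (wte (x, h + 2) - 1) = wt (x, h) * (wte (x, h) - 1))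
    (C : DyckPath m) (G : DyckPath (m + 2 + 2)) :
    ∑ p ∈ valleyMarkings C G, p.1.markedWeight wt wte p.2 =
      ∑ p ∈ peakMarkings C G, p.1.markedWeight wt wte p.2 := by
  have hraise : ∀ p ∈ valleyMarkings C G, ∃ E, IsRaise p.1 E p.2 := fun p hp =>
    exists_isRaise (Finset.mem_Icc.1 (mem_sigma.1 hp).2).2
  have hlower : ∀ p ∈ peakMarkings C G, ∃ D, IsRaise D p.1 p.2 := by
    intro p hp
    obtain ⟨hp₁, hp₂⟩ := mem_sigma.1 hp
    have hpeak := (Finset.mem_Icc.1 hp₂).2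
    exact exists_isRaise_of_two_le hpeak fun x hx =>
      two_le_ht_of_pathLT (mem_filter.1 hp₁).2.1 (hpeak hx)
  choose raise hraise using hraise
  choose lower hlower using hlower
  have hmem p (hp : p ∈ valleyMarkings C G) : ⟨raise p hp, p.2⟩ ∈ peakMarkings C G :=
    (mem_valleyMarkings_iff_mem_peakMarkings (hraise p hp)).1 hp
  have hmem' p (hp : p ∈ peakMarkings C G) : ⟨lower p hp, p.2⟩ ∈ valleyMarkings C G :=
    (mem_valleyMarkings_iff_mem_peakMarkings (hlower p hp)).2 hp
  refine sum_bij' (fun p hp => ⟨raise p hp, p.2⟩) (fun p hp => ⟨lower p hp, p.2⟩) hmem hmem'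
    (fun p hp => ?_) (fun p hp => ?_) fun p hp => (hraise p hp).markedWeight_eq hinv
  · exact Sigma.ext ((hlower _ (hmem p hp)).eq_left (hraise p hp)) HEq.rfl
  · exact Sigma.ext ((hraise _ (hmem' p hp)).eq_right (hlower p hp)) HEq.rfl

theorem sum_weakStep_mul_strictStep (hwte : ∀ p, wte p ≠ 0)
    (hinv : ∀ x h, wt (x, h + 2) * (wte (x, h + 2) - 1) = wt (x, h) * (wte (x, h) - 1))
    (C : DyckPath m) (G : DyckPath (m + 2 + 2)) :
    ∑ D : DyckPath (m + 2),
        weakStep wte C D * D.weight wt wte D.valleyAbscissas * strictStep F D G =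
      ∑ E : DyckPath (m + 2),
        strictStep F C E * E.weight wt wte E.peakAbscissas * weakStep wte E G := by
  rw [← sum_valleyMarkings hwte, ← sum_peakMarkings hwte,
    sum_valleyMarkings_eq_sum_peakMarkings hinv]

theorem exists_forall_pathLT (m : ℕ) :
    ∃ M : DyckPath (m + 2), ∀ D : DyckPath m, PathLT m (m + 2) D.1 M.1 := by
  obtain ⟨M, hM⟩ := exists_ht_eq (m := m + 2) (f := fun x => max 0 (m + 2 - |x|))
    { nonneg := fun x => le_max_left _ _
      eq_zero := by grind
      step := by grind }
  refine ⟨M, fun D => pathLT_iff.2 fun x hx hx' => ?_⟩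
  have := D.isDyckProfile_ht.le_sub_abs hx hx'
  rw [hM]
  grind

theorem weakStep_of_pathLT (wte : ℤ × ℕ → F) {D : DyckPath m} {E : DyckPath m'}
    (h : PathLT m m' D.1 E.1) : weakStep wte D E = 1 := by
  have hlt := pathLT_iff.1 h
  have hle : PathLE m m' D.1 E.1 := pathLE_iff.2 (by grind)
  have hinter : interPts m m' D.1 E.1 = ∅ := by
    ext x
    grind [mem_interPts]
  rw [weakStep, if_pos hle, interProd, hinter, prod_empty]

theorem sum_weakStep (hwte : ∀ p, wte p ≠ 0)
    (hinv : ∀ x h, wt (x, h + 2) * (wte (x, h + 2) - 1) = wt (x, h) * (wte (x, h) - 1))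
    (C : DyckPath m) :
    ∑ D : DyckPath (m + 2), weakStep wte C D * D.weight wt wte D.valleyAbscissas =
      ∑ E : DyckPath (m + 2), strictStep F C E * E.weight wt wte E.peakAbscissas := by
  -- A top path `M` strictly above every path makes the steps from `D` and `E` to `M` trivial.
  obtain ⟨M, hM⟩ := exists_forall_pathLT (m + 2)
  have hstrict (D) : strictStep F D M = 1 := if_pos (hM D)
  simpa only [hstrict, weakStep_of_pathLT wte (hM _), mul_one] using
    sum_weakStep_mul_strictStep hwte hinv C M

end Exchange

theorem prod_peakAbscissas_pow {M : Type*} [CommMonoid M] (q : M) (hm : 0 < m) (D : DyckPath m) :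
    ∏ x ∈ D.peakAbscissas, q ^ (2 * (D.pt x).2 + 1) =
      q ^ (2 * m + 1) * ∏ x ∈ D.valleyAbscissas, q ^ (2 * (D.pt x).2 + 1) := by
  have hcast (x : ℤ) : (((D.pt x).2 : ℕ) : ℤ) = D.ht x :=
    Int.toNat_of_nonneg (D.isDyckProfile_ht.nonneg x)
  rw [prod_pow_eq_pow_sum, prod_pow_eq_pow_sum, ← pow_add]
  congr 1
  zify
  simpa only [hcast] using D.sum_peakAbscissas hm

end DyckPath

end Weights

/-! ### Transfer operators -/

section Transfer

variable {F : Type*} [CommSemiring F] {P : ℕ → Type*} [∀ i, Fintype (P i)]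

/-- The transfer operator of a kernel between the consecutive levels of a graded family. -/
def transfer (K : ∀ i, P i → P (i + 1) → F) (g : ∀ i, P i → F) (i : ℕ) (x : P i) : F :=
  ∑ y, K i x y * g (i + 1) y

theorem transfer_smul (K : ∀ i, P i → P (i + 1) → F) (c : ℕ → F) (g : ∀ i, P i → F) :
    transfer K (c • g) = (fun i => c (i + 1)) • transfer K g := by
  funext i x
  simp only [transfer, Pi.smul_apply', Pi.smul_apply, smul_eq_mul, mul_sum, mul_left_comm]

theorem transfer_transfer (A B : ∀ i, P i → P (i + 1) → F) (g : ∀ i, P i → F) (i : ℕ)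
    (x : P i) :
    transfer A (transfer B g) i x = ∑ z, (∑ y, A i x y * B (i + 1) y z) * g (i + 1 + 1) z := by
  simp only [transfer, mul_sum, sum_mul, mul_assoc]
  exact sum_comm

section Exchange

variable {A B : ∀ i, P i → P (i + 1) → F} {c : ℕ → F}

theorem transfer_iterate_transfer_one
    (hcomm : ∀ g, transfer A (transfer B g) = c • transfer B (transfer A g))
    (hone : transfer A 1 = c • transfer B 1) (k : ℕ) :
    transfer A ((transfer B)^[k] 1) =
      (fun i => ∏ j ∈ range (k + 1), c (i + j)) • (transfer B)^[k + 1] 1 := by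
  induction k with
  | zero => simpa using hone
  | succ k ih =>
    rw [Function.iterate_succ_apply', hcomm, ih, transfer_smul,
      ← Function.iterate_succ_apply' (transfer B), smul_smul]
    congr 1
    funext i
    simp [prod_range_succ' _ (k + 1), mul_comm, add_assoc, add_comm 1]

theorem iterate_transfer_one
    (hcomm : ∀ g, transfer A (transfer B g) = c • transfer B (transfer A g))
    (hone : transfer A 1 = c • transfer B 1) (k : ℕ) :
    (transfer A)^[k] 1 =
      (fun i => ∏ j ∈ range k, c (i + j) ^ (j + 1)) • (transfer B)^[k] 1 := by
  induction k with
  | zero => funext; simp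
  | succ k ih =>
    rw [Function.iterate_succ_apply', ih, transfer_smul,
      transfer_iterate_transfer_one hcomm hone, smul_smul]
    congr 1
    funext i
    rw [Pi.mul_apply, prod_range_succ' _ k, prod_range_succ' _ k, ← mul_assoc, ← prod_mul_distrib]
    simp [pow_succ, add_assoc, add_comm 1]

end Exchange

theorem sum_chain (K : ∀ i, P i → P (i + 1) → F) (h : P 0 → F) (k : ℕ) :
    ∑ D : ∀ i : Fin (k + 1), P i,
        h (D 0) * ∏ j : Fin k, K j (D j.castSucc) (D j.succ) =
      ∑ x, h x * (transfer K)^[k] 1 0 x := by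
  induction k generalizing P with
  | zero =>
    rw [← (Equiv.piUnique fun i : Fin 1 => P i).symm.sum_comp]
    simp only [Finset.univ_eq_empty, prod_empty, mul_one, Function.iterate_zero, id, Pi.one_apply]
    rfl
  | succ k ih =>
    have hshift : Function.Semiconj (fun (g : ∀ i, P i → F) i => g (i + 1)) (transfer K)
        (transfer fun i => K (i + 1)) := fun _ => rfl
    calc ∑ D : ∀ i : Fin (k + 2), P i, h (D 0) * ∏ j : Fin (k + 1), K j (D j.castSucc) (D j.succ)
        = ∑ x, h x * ∑ D : ∀ i : Fin (k + 1), P (i + 1),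
            K 0 x (D 0) * ∏ j : Fin k, K (j + 1) (D j.castSucc) (D j.succ) := by
          rw [← (Fin.consEquiv fun i : Fin (k + 2) => P i).sum_comp, Fintype.sum_prod_type]
          simp only [Fin.consEquiv, Fin.prod_univ_succ (n := k), mul_sum]
          rfl
      _ = ∑ x, h x * ∑ y, K 0 x y * (transfer fun i => K (i + 1))^[k] 1 0 y :=
          sum_congr rfl fun x _ => congrArg _ (ih (fun i => K (i + 1)) (K 0 x))
      _ = ∑ x, h x * (transfer K)^[k + 1] 1 0 x := by
          refine sum_congr rfl fun x _ => ?_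
          rw [Function.iterate_succ_apply']
          exact congrArg (h x * ∑ y, K 0 x y * · 0 y) ((hshift.iterate_right k).eq 1).symm

end Transfer

/-! ### Tuples of Dyck paths -/

section Tuples

variable {F : Type*} [Field F] {wt wte : ℤ × ℕ → F} {n : ℕ}

theorem sum_dyckTuple {k : ℕ}
    (R : ∀ i : ℕ, (Fin (2 * (n + 2 * i)) → Bool) → (Fin (2 * (n + 2 * (i + 1))) → Bool) → Prop)
    (f : DyckTuple n (k + 1) → F) :
    ∑ D : DyckTuple n (k + 1) with (∀ i, IsDyck (D i)) ∧
        ∀ (i : ℕ) (h : i + 1 < k + 1), R i (D ⟨i, by omega⟩) (D ⟨i + 1, h⟩), f D =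
      ∑ D : ∀ i : Fin (k + 1), DyckPath (n + 2 * i),
        if ∀ j : Fin k, R j (D j.castSucc).1 (D j.succ).1 then f fun i => (D i).1 else 0 := by
  rw [← sum_filter]
  refine sum_bij' (fun D hD i => ⟨D i, (mem_filter.1 hD).2.1 i⟩) (fun D _ i => (D i).1)
    (fun D hD => ?_) (fun D hD => ?_) (fun _ _ => rfl) (fun _ _ => rfl) fun _ _ => rfl
  · exact mem_filter.2 ⟨mem_univ _, fun j => (mem_filter.1 hD).2.2 j (Nat.succ_lt_succ j.2)⟩
  · exact mem_filter.2 ⟨mem_univ _, fun i => (D i).2,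
      fun i h => (mem_filter.1 hD).2 ⟨i, Nat.succ_lt_succ_iff.1 h⟩⟩

/-- The kernel of a consecutive pair of paths in the weakly increasing sum, where the upper path
carries its weight. -/
def weakKernel (wt wte : ℤ × ℕ → F) (n i : ℕ) (D : DyckPath (n + 2 * i))
    (E : DyckPath (n + 2 * (i + 1))) : F :=
  D.weakStep wte E * E.weight wt wte E.valleyAbscissas

/-- The kernel of a consecutive pair of paths in the strictly increasing sum, where the upper path
carries its weight. -/
def strictKernel (wt wte : ℤ × ℕ → F) (n i : ℕ) (D : DyckPath (n + 2 * i))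
    (E : DyckPath (n + 2 * (i + 1))) : F :=
  D.strictStep F E * E.weight wt wte E.valleyAbscissas

theorem prod_wtVal (wt wte : ℤ × ℕ → F) {k : ℕ} (D : ∀ i : Fin (k + 1), DyckPath (n + 2 * i)) :
    ∏ i : Fin (k + 1), wtVal wt wte (-(n : ℤ) - 2 * (i : ℕ)) (D i).1 =
      (D 0).weight wt wte (D 0).valleyAbscissas *
        ∏ j : Fin k, (D j.succ).weight wt wte (D j.succ).valleyAbscissas := by
  rw [← Fin.prod_univ_succ fun i => (D i).weight wt wte (D i).valleyAbscissas]
  refine prod_congr rfl fun i _ => ?_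
  rw [← DyckPath.wtVal_eq_weight]
  congr 1
  push_cast
  ring

theorem weakSum_eq_sum_transfer (wt wte : ℤ × ℕ → F) (n k : ℕ) :
    weakSum wt wte n (k + 1) = ∑ D : DyckPath n, D.weight wt wte D.valleyAbscissas *
      (transfer (weakKernel wt wte n))^[k] 1 0 D := by
  rw [weakSum, weakTuples, sum_dyckTuple fun i => PathLE (n + 2 * i) (n + 2 * (i + 1))]
  refine Eq.trans (sum_congr rfl fun D _ => ?_)
    (sum_chain (weakKernel wt wte n) (fun D => D.weight wt wte D.valleyAbscissas) k)
  simp only [prod_wtVal, weakKernel, DyckPath.weakStep, prod_mul_distrib, prod_ite_zero, mem_univ,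
    true_imp_iff]
  split_ifs
  · rw [mul_assoc, mul_comm (∏ _, _)]
    rfl
  · simp

theorem strictSum_eq_sum_transfer (wt wte : ℤ × ℕ → F) (n k : ℕ) :
    strictSum wt wte n (k + 1) = ∑ D : DyckPath n, D.weight wt wte D.valleyAbscissas *
      (transfer (strictKernel wt wte n))^[k] 1 0 D := by
  rw [strictSum, strictTuples, sum_dyckTuple fun i => PathLT (n + 2 * i) (n + 2 * (i + 1))]
  refine Eq.trans (sum_congr rfl fun D _ => ?_)
    (sum_chain (strictKernel wt wte n) (fun D => D.weight wt wte D.valleyAbscissas) k)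
  simp only [prod_wtVal, strictKernel, DyckPath.strictStep, prod_mul_distrib, prod_ite_zero,
    mem_univ, true_imp_iff, prod_const_one]
  split_ifs
  · rw [one_mul]
    rfl
  · rw [zero_mul, mul_zero]

section Exchange

variable {c : ℕ → F}

theorem sum_weakKernel_mul_strictKernel (hwte : ∀ p, wte p ≠ 0)
    (hinv : ∀ x h, wt (x, h + 2) * (wte (x, h + 2) - 1) = wt (x, h) * (wte (x, h) - 1))
    (hc : ∀ m, 0 < m → ∀ E : DyckPath m,
      ∏ x ∈ E.peakAbscissas, wte (E.pt x) = c m * ∏ x ∈ E.valleyAbscissas, wte (E.pt x))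
    (i : ℕ) (C : DyckPath (n + 2 * i))
    (G : DyckPath (n + 2 * (i + 1 + 1))) :
    ∑ D, weakKernel wt wte n i C D * strictKernel wt wte n (i + 1) D G =
      c (n + 2 * (i + 1)) * ∑ E, strictKernel wt wte n i C E * weakKernel wt wte n (i + 1) E G := by
  have hexchange := DyckPath.sum_weakStep_mul_strictStep hwte hinv C G
  simp only [DyckPath.weight_peakAbscissas (hc (n + 2 * i + 2) (by omega) _)] at hexchange
  simp only [weakKernel, strictKernel, ← mul_assoc, ← sum_mul]
  refine congrArg (· * G.weight wt wte G.valleyAbscissas) (hexchange.trans ?_)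
  rw [mul_sum]
  refine sum_congr rfl fun E _ => ?_
  rw [mul_left_comm, mul_assoc (c _)]
  rfl

theorem sum_weakKernel (hwte : ∀ p, wte p ≠ 0)
    (hinv : ∀ x h, wt (x, h + 2) * (wte (x, h + 2) - 1) = wt (x, h) * (wte (x, h) - 1))
    (hc : ∀ m, 0 < m → ∀ E : DyckPath m,
      ∏ x ∈ E.peakAbscissas, wte (E.pt x) = c m * ∏ x ∈ E.valleyAbscissas, wte (E.pt x))
    (i : ℕ) (C : DyckPath (n + 2 * i)) :
    ∑ D, weakKernel wt wte n i C D =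
      c (n + 2 * (i + 1)) * ∑ E, strictKernel wt wte n i C E := by
  refine (DyckPath.sum_weakStep hwte hinv C).trans ?_
  rw [mul_sum]
  refine sum_congr rfl fun E _ => ?_
  rw [DyckPath.weight_peakAbscissas (hc _ (Nat.succ_pos _) E), mul_left_comm]
  rfl

theorem weakSum_eq_prod_mul_strictSum (hwte : ∀ p, wte p ≠ 0)
    (hinv : ∀ x h, wt (x, h + 2) * (wte (x, h + 2) - 1) = wt (x, h) * (wte (x, h) - 1))
    (hc : ∀ m, 0 < m → ∀ E : DyckPath m,
      ∏ x ∈ E.peakAbscissas, wte (E.pt x) = c m * ∏ x ∈ E.valleyAbscissas, wte (E.pt x))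
    (n k : ℕ) :
    weakSum wt wte n (k + 1) =
      (∏ j ∈ range k, c (n + 2 * (j + 1)) ^ (j + 1)) * strictSum wt wte n (k + 1) := by
  have hcomm (g : ∀ i, DyckPath (n + 2 * i) → F) :
      transfer (weakKernel wt wte n) (transfer (strictKernel wt wte n) g) =
        (fun i => c (n + 2 * (i + 1))) •
          transfer (strictKernel wt wte n) (transfer (weakKernel wt wte n) g) := by
    funext i C
    simp only [Pi.smul_apply', Pi.smul_apply, transfer_transfer, smul_eq_mul,
      sum_weakKernel_mul_strictKernel hwte hinv hc, mul_assoc]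
    exact (mul_sum _ _ _).symm
  have hone : transfer (weakKernel wt wte n) 1 =
      (fun i => c (n + 2 * (i + 1))) • transfer (strictKernel wt wte n) 1 := by
    funext i C
    simpa only [transfer, Pi.smul_apply', Pi.smul_apply, Pi.one_apply, mul_one, smul_eq_mul]
      using sum_weakKernel hwte hinv hc i C
  rw [weakSum_eq_sum_transfer, strictSum_eq_sum_transfer, iterate_transfer_one hcomm hone, mul_sum]
  simp only [Pi.smul_apply', Pi.smul_apply, smul_eq_mul, mul_left_comm, zero_add]

end Exchange

end Tuples

theorem sum_range_exponent (n k : ℕ) :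
    ∑ j ∈ range k, (2 * (n + 2 * (j + 1)) + 1) * (j + 1) =
      (k + 1) * k * (6 * n + 8 * (k + 1) - 1) / 6 := by
  rw [show 6 * n + 8 * (k + 1) - 1 = 6 * n + 8 * k + 7 by omega]
  symm
  refine Nat.div_eq_of_eq_mul_right (by norm_num) ?_
  induction k with
  | zero => simp
  | succ k ih => rw [sum_range_succ, mul_add 6, ← ih]; ring

theorem inv_one_sub_mul_sub_one {F : Type*} [Field F] {a : F} (ha : a ≠ 1) :
    (1 - a)⁻¹ * (a - 1) = -1 := by
  rw [← neg_sub 1 a, mul_neg, inv_mul_cancel₀ (sub_ne_zero.2 ha.symm)]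

theorem statement_3_general {F : Type*} [Field F] {q : F} (hq : q ≠ 0)
    (hq₁ : ∀ h : ℕ, q ^ (2 * h + 1) ≠ 1) (n k : ℕ) :
    weakSum (fun p => (1 - q ^ (2 * (p.2 : ℤ) + 1))⁻¹) (fun p => q ^ (2 * (p.2 : ℤ) + 1)) n k =
      q ^ (k * (k - 1) * (6 * n + 8 * k - 1) / 6) *
        strictSum (fun p => (1 - q ^ (2 * (p.2 : ℤ) + 1))⁻¹)
          (fun p => q ^ (2 * (p.2 : ℤ) + 1)) n k := by
  have hzpow (h : ℕ) : q ^ (2 * (h : ℤ) + 1) = q ^ (2 * h + 1) := by norm_cast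
  simp only [hzpow]
  rcases k with _ | k
  · simp [weakSum, strictSum, weakTuples, strictTuples]
  rw [weakSum_eq_prod_mul_strictSum (c := fun m => q ^ (2 * m + 1)) (fun p => pow_ne_zero _ hq)
    (fun _ h => by rw [inv_one_sub_mul_sub_one (hq₁ _), inv_one_sub_mul_sub_one (hq₁ _)])
    fun m hm E => E.prod_peakAbscissas_pow q hm, Nat.add_sub_cancel, ← sum_range_exponent,
    ← prod_pow_eq_pow_sum]
  simp only [← pow_mul]

theorem ratFunc_X_pow_ne_one {K : Type*} [Field K] {d : ℕ} (hd : d ≠ 0) :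
    (RatFunc.X : RatFunc K) ^ d ≠ 1 := by
  rw [← RatFunc.algebraMap_X, ← map_pow, ← map_one (algebraMap (Polynomial K) (RatFunc K))]
  intro h
  have := congrArg Polynomial.natDegree (RatFunc.algebraMap_injective K h)
  simp [hd] at this

theorem statement_3 (n k : ℕ) (hn : 0 < n) (hk : 0 < k) :
    weakSum (fun p => (1 - (RatFunc.X : RatFunc ℚ) ^ (2 * (p.2 : ℤ) + 1))⁻¹)
        (fun p => (RatFunc.X : RatFunc ℚ) ^ (2 * (p.2 : ℤ) + 1)) n k =
      (RatFunc.X : RatFunc ℚ) ^ (k * (k - 1) * (6 * n + 8 * k - 1) / 6) *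
        strictSum (fun p => (1 - (RatFunc.X : RatFunc ℚ) ^ (2 * (p.2 : ℤ) + 1))⁻¹)
          (fun p => (RatFunc.X : RatFunc ℚ) ^ (2 * (p.2 : ℤ) + 1)) n k :=
  statement_3_general RatFunc.X_ne_zero (fun _ => ratFunc_X_pow_ne_one (Nat.succ_ne_zero _)) n k

end Paper
end
end

section
/- For every nonnegative integer n, the identity Σ_{π∈Alt_{2n+1}} q^{maj(κ_{2n+1}π^{-1})} = Σ_{π∈Alt_{2n+1}} q^{inv(π)−ndes(π_e)} holds (as an identity of Laurent polynomials in q; in fact all exponents on the right are nonnegative). -/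
open Finset

attribute [local instance 10] Classical.propDecidable

noncomputable section

namespace Paper

/-!
Read the word of `π⁻¹` from right to left. Then `π` is alternating iff no odd letter precedes a
letter adjacent to it in value. For `n ≥ 1` the first letter of such a word is therefore an even
`c`, and what follows is an arbitrary shuffle of the letters below `c` and the letters above `c`,
each of which is again a word of this kind.

Summed over all shuffles of two words with every letter of the first below every letter of the
second, both `q ^ inv` and `q ^ maj` produce a Gaussian binomial coefficient. Hence the generating
functions of `maj(κ π⁻¹)` and of `inv(π) + des(π_e)` satisfy the same recurrence up to one factor
`q` for each letter `c` split off, that is, up to `q ^ n`. Finally, `ndes(π_e) = n - des(π_e)`.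
-/

section Shuffle

variable {α β : Type*}

/-- The list of all shuffles of two words: the words that split into two complementary
subsequences, equal to `x` and to `y`. -/
def shuffles : List α → List α → List (List α)
  | [], y => [y]
  | a :: x, [] => [a :: x]
  | a :: x, b :: y =>
    (shuffles x (b :: y)).map (List.cons a) ++ (shuffles (a :: x) y).map (List.cons b)

theorem shuffles_nil_left (y : List α) : shuffles [] y = [y] := by
  rw [shuffles]

theorem shuffles_nil_right (x : List α) : shuffles x [] = [x] := by
  cases x <;> rw [shuffles]

theorem cons_mem_shuffles_left {a : α} {x y u : List α} (h : u ∈ shuffles x y) :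
    a :: u ∈ shuffles (a :: x) y := by
  cases y with
  | nil => simpa only [shuffles_nil_right, List.mem_singleton, List.cons.injEq, true_and] using h
  | cons b y =>
    rw [shuffles]
    exact List.mem_append_left _ (List.mem_map_of_mem h)

theorem cons_mem_shuffles_right {b : α} {x y u : List α} (h : u ∈ shuffles x y) :
    b :: u ∈ shuffles x (b :: y) := by
  cases x with
  | nil => simpa only [shuffles_nil_left, List.mem_singleton, List.cons.injEq, true_and] using h
  | cons a x =>
    rw [shuffles]
    exact List.mem_append_right _ (List.mem_map_of_mem h)

theorem mem_shuffles_filter (p : α → Bool) (u : List α) :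
    u ∈ shuffles (u.filter p) (u.filter fun a => !p a) := by
  induction u with
  | nil => simp [shuffles_nil_left]
  | cons a u ih =>
    cases hp : p a
    · simpa [hp] using cons_mem_shuffles_right ih
    · simpa [hp] using cons_mem_shuffles_left ih

theorem perm_append_of_mem_shuffles {x y u : List α} (h : u ∈ shuffles x y) :
    u.Perm (x ++ y) := by
  fun_induction shuffles x y generalizing u with
  | case1 y => simp_all
  | case2 a x => simp_all
  | case3 a x b y ihx ihy =>
    simp only [List.mem_append, List.mem_map] at h
    obtain ⟨v, hv, rfl⟩ | ⟨v, hv, rfl⟩ := h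
    · exact (ihx hv).cons a
    · exact ((ihy hv).cons b).trans List.perm_middle.symm

theorem length_of_mem_shuffles {x y u : List α} (h : u ∈ shuffles x y) :
    u.length = x.length + y.length := by
  simpa only [List.length_append] using (perm_append_of_mem_shuffles h).length_eq

theorem filter_of_mem_shuffles {p : α → Bool} {x y u : List α} (hx : ∀ a ∈ x, p a = true)
    (hy : ∀ b ∈ y, p b = false) (h : u ∈ shuffles x y) :
    u.filter p = x ∧ u.filter (fun a => !p a) = y := by
  fun_induction shuffles x y generalizing u with
  | case1 y => simp_all
  | case2 a x => simp_all
  | case3 a x b y ihx ihy =>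
    simp only [List.mem_append, List.mem_map] at h
    obtain ⟨v, hv, rfl⟩ | ⟨v, hv, rfl⟩ := h
    · simp_all
    · simp_all

theorem pairwise_of_mem_shuffles {P : α → α → Prop} {x y u : List α} (hx : x.Pairwise P)
    (hy : y.Pairwise P) (hxy : ∀ a ∈ x, ∀ b ∈ y, P a b ∧ P b a) (h : u ∈ shuffles x y) :
    u.Pairwise P := by
  fun_induction shuffles x y generalizing u with
  | case1 y => simp_all
  | case2 a x => simp_all
  | case3 a x b y ihx ihy =>
    simp only [List.mem_append, List.mem_map] at h
    obtain ⟨v, hv, rfl⟩ | ⟨v, hv, rfl⟩ := h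
    · obtain ⟨ha, hx⟩ := List.pairwise_cons.1 hx
      refine List.pairwise_cons.2 ⟨fun c hc => ?_,
        ihx hx hy (fun c hc => hxy c (List.mem_cons_of_mem _ hc)) hv⟩
      exact (List.mem_append.1 ((perm_append_of_mem_shuffles hv).mem_iff.1 hc)).elim (ha c)
        fun hc => (hxy a List.mem_cons_self c hc).1
    · obtain ⟨hb, hy⟩ := List.pairwise_cons.1 hy
      refine List.pairwise_cons.2 ⟨fun c hc => ?_,
        ihy hx hy (fun c hc d hd => hxy c hc d (List.mem_cons_of_mem _ hd)) hv⟩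
      exact (List.mem_append.1 ((perm_append_of_mem_shuffles hv).mem_iff.1 hc)).elim
        (fun hc => (hxy c hc b List.mem_cons_self).2) (hb c)

theorem nodup_shuffles {x y : List α} (h : x.Disjoint y) : (shuffles x y).Nodup := by
  fun_induction shuffles x y with
  | case1 y => exact List.nodup_singleton _
  | case2 a x => exact List.nodup_singleton _
  | case3 a x b y ihx ihy =>
    have hab : a ≠ b := by
      rintro rfl
      exact h List.mem_cons_self List.mem_cons_self
    refine .append ((ihx (List.disjoint_of_disjoint_cons_left h)).map List.cons_injective)
      ((ihy (List.disjoint_of_disjoint_cons_right h)).map List.cons_injective) ?_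
    simp only [List.Disjoint, List.mem_map]
    rintro _ ⟨v, -, rfl⟩ ⟨w, -, hw⟩
    exact hab (List.cons.inj hw).1.symm

theorem shuffles_map (f : α → β) (x y : List α) :
    shuffles (x.map f) (y.map f) = (shuffles x y).map (List.map f) := by
  fun_induction shuffles x y with
  | case1 y => simp [shuffles_nil_left]
  | case2 a x => simp [shuffles_nil_right]
  | case3 a x b y ihx ihy =>
    simp only [List.map_cons] at ihx ihy
    simp [shuffles, ihx, ihy, Function.comp_def]

theorem sum_shuffles_cons_cons {M : Type*} [AddCommMonoid M] (f : List α → M) (a b : α)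
    (x y : List α) :
    ((shuffles (a :: x) (b :: y)).map f).sum =
      ((shuffles x (b :: y)).map fun u => f (a :: u)).sum +
        ((shuffles (a :: x) y).map fun u => f (b :: u)).sum := by
  simp [shuffles, Function.comp_def]

end Shuffle

section GaussianBinomial

variable {R : Type*} [CommSemiring R] (q : R)

/-- The Gaussian binomial coefficient `[p + s choose p]_q`, by its Pascal recurrence. The
arguments are `p` and `s`, the sizes of the two parts. -/
def gaussBinom : ℕ → ℕ → R
  | 0, _ => 1
  | _ + 1, 0 => 1
  | p + 1, s + 1 => gaussBinom p (s + 1) + q ^ (p + 1) * gaussBinom (p + 1) s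

theorem gaussBinom_zero_left (s : ℕ) : gaussBinom q 0 s = 1 := by
  rw [gaussBinom]

theorem gaussBinom_zero_right (p : ℕ) : gaussBinom q p 0 = 1 := by
  cases p <;> rw [gaussBinom]

theorem gaussBinom_succ_succ (p s : ℕ) :
    gaussBinom q (p + 1) (s + 1) =
      gaussBinom q p (s + 1) + q ^ (p + 1) * gaussBinom q (p + 1) s := by
  rw [gaussBinom]

theorem gaussBinom_succ_succ' : ∀ p s : ℕ,
    gaussBinom q (p + 1) (s + 1) =
      q ^ (s + 1) * gaussBinom q p (s + 1) + gaussBinom q (p + 1) s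
  | 0, 0 => by
    rw [gaussBinom_succ_succ, gaussBinom_zero_left, gaussBinom_zero_right, add_comm]
  | 0, s + 1 => by
    conv_lhs => rw [gaussBinom_succ_succ, gaussBinom_succ_succ' 0 s]
    conv_rhs => rw [gaussBinom_succ_succ q 0 s]
    simp only [gaussBinom_zero_left]
    ring
  | p + 1, 0 => by
    conv_lhs => rw [gaussBinom_succ_succ, gaussBinom_succ_succ' p 0]
    conv_rhs => rw [gaussBinom_succ_succ q p 0]
    simp only [gaussBinom_zero_right]
    ring
  | p + 1, s + 1 => by
    conv_lhs => rw [gaussBinom_succ_succ, gaussBinom_succ_succ' p (s + 1),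
      gaussBinom_succ_succ' (p + 1) s]
    conv_rhs => rw [gaussBinom_succ_succ q p (s + 1), gaussBinom_succ_succ q (p + 1) s]
    ring

end GaussianBinomial

section ShuffleStatistics

variable {α : Type*}

/-- The number of pairs of positions `i < j` of a word `w` with `P w_i w_j`. For `P = (· < ·)`
this is the number of inversions of the reversed word. -/
def pairCount (P : α → α → Prop) [DecidableRel P] : List α → ℕ
  | [] => 0
  | a :: t => t.countP (P a) + pairCount P t

theorem pairCount_of_mem_shuffles {P : α → α → Prop} [DecidableRel P] {x y u : List α}
    (hxy : ∀ a ∈ x, ∀ b ∈ y, ¬P a b ∧ ¬P b a) (h : u ∈ shuffles x y) :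
    pairCount P u = pairCount P x + pairCount P y := by
  fun_induction shuffles x y generalizing u with
  | case1 y => simp_all [pairCount]
  | case2 a x => simp_all [pairCount]
  | case3 a x b y ihx ihy =>
    simp only [List.mem_append, List.mem_map] at h
    obtain ⟨v, hv, rfl⟩ | ⟨v, hv, rfl⟩ := h
    · have hcross : (b :: y).countP (P a) = 0 :=
        List.countP_eq_zero.2 fun c hc => by simpa using (hxy a (by simp) c hc).1
      rw [pairCount, pairCount, ihx (fun c hc => hxy c (by simp [hc])) hv,
        (perm_append_of_mem_shuffles hv).countP_eq, List.countP_append, hcross]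
      ring
    · have hcross : (a :: x).countP (P b) = 0 :=
        List.countP_eq_zero.2 fun c hc => by simpa using (hxy c hc b (by simp)).2
      rw [pairCount.eq_2 P b v, pairCount.eq_2 P b y,
        ihy (fun c hc d hd => hxy c hc d (by simp [hd])) hv,
        (perm_append_of_mem_shuffles hv).countP_eq, List.countP_append, hcross]
      ring

/-- The major index of the reversal of a word. -/
def majRev [LT α] [DecidableLT α] : List α → ℕ
  | [] => 0
  | [_] => 0
  | a :: b :: t => (if a < b then t.length + 1 else 0) + majRev (b :: t)

variable [LinearOrder α] {R : Type*} [CommSemiring R] (q : R)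

theorem sum_shuffles_pow_pairCount_lt {x y : List α} (hxy : ∀ a ∈ x, ∀ b ∈ y, a < b) :
    ((shuffles x y).map fun u => q ^ pairCount (· < ·) u).sum =
      q ^ (pairCount (· < ·) x + pairCount (· < ·) y) * gaussBinom q x.length y.length := by
  fun_induction shuffles x y with
  | case1 y => simp [pairCount, gaussBinom_zero_left]
  | case2 a x => simp [pairCount, gaussBinom_zero_right]
  | case3 a x b y ihx ihy =>
    have hx : ∀ u ∈ shuffles x (b :: y), q ^ pairCount (· < ·) (a :: u) =
        q ^ (x.countP (a < ·) + (y.length + 1)) * q ^ pairCount (· < ·) u := by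
      intro u hu
      have hcross : (b :: y).countP (a < ·) = y.length + 1 :=
        List.countP_eq_length.2 fun c hc => by simpa using hxy a (by simp) c hc
      rw [pairCount, (perm_append_of_mem_shuffles hu).countP_eq, List.countP_append, hcross,
        pow_add]
    have hy : ∀ u ∈ shuffles (a :: x) y, q ^ pairCount (· < ·) (b :: u) =
        q ^ y.countP (b < ·) * q ^ pairCount (· < ·) u := by
      intro u hu
      have hcross : (a :: x).countP (b < ·) = 0 :=
        List.countP_eq_zero.2 fun c hc => by simpa using (hxy c hc b (by simp)).le
      rw [pairCount, (perm_append_of_mem_shuffles hu).countP_eq, List.countP_append, hcross,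
        zero_add, pow_add]
    rw [← shuffles, sum_shuffles_cons_cons, List.map_congr_left hx, List.map_congr_left hy,
      List.sum_map_mul_left, List.sum_map_mul_left, ihx fun c hc => hxy c (by simp [hc]),
      ihy fun c hc d hd => hxy c hc d (by simp [hd])]
    simp only [List.length_cons, gaussBinom_succ_succ', pairCount]
    ring

-- The letter `a` in front is arbitrary so that the induction can put the previous letter there.
theorem sum_shuffles_pow_majRev_cons {x y : List α} (a : α) (hxy : ∀ b ∈ x, ∀ c ∈ y, b < c) :
    ((shuffles x y).map fun u => q ^ majRev (a :: u)).sum =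
      q ^ (majRev (a :: x) + majRev (a :: y)) * gaussBinom q x.length y.length := by
  fun_induction shuffles x y generalizing a with
  | case1 y => simp [majRev, gaussBinom_zero_left]
  | case2 b x => simp [majRev, gaussBinom_zero_right]
  | case3 b x c y ihx ihy =>
    have hbc : b < c := hxy b (by simp) c (by simp)
    have hcons : ∀ d, ∀ u : List α, u.length = x.length + y.length + 1 →
        q ^ majRev (a :: d :: u) =
          q ^ (if a < d then x.length + y.length + 2 else 0) * q ^ majRev (d :: u) := by
      intro d u hu
      rw [majRev, hu, pow_add]
    have hx : ∀ u ∈ shuffles x (c :: y), q ^ majRev (a :: b :: u) =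
        q ^ (if a < b then x.length + y.length + 2 else 0) * q ^ majRev (b :: u) :=
      fun u hu => hcons b u (length_of_mem_shuffles hu)
    have hy : ∀ u ∈ shuffles (b :: x) y, q ^ majRev (a :: c :: u) =
        q ^ (if a < c then x.length + y.length + 2 else 0) * q ^ majRev (c :: u) :=
      fun u hu => hcons c u (by rw [length_of_mem_shuffles hu, List.length_cons]; ring)
    rw [← shuffles, sum_shuffles_cons_cons, List.map_congr_left hx, List.map_congr_left hy,
      List.sum_map_mul_left, List.sum_map_mul_left, ihx b fun d hd => hxy d (by simp [hd]),
      ihy c fun d hd e he => hxy d hd e (by simp [he])]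
    simp only [majRev, List.length_cons, hbc, hbc.not_gt, if_true, if_false]
    rcases lt_or_ge a b with hab | hba
    · simp only [hab, hab.trans hbc, if_true, gaussBinom_succ_succ']
      ring
    rcases lt_or_ge a c with hac | hca
    · simp only [hba.not_gt, hac, if_true, if_false, gaussBinom_succ_succ]
      ring
    · simp only [hba.not_gt, hca.not_gt, if_false, gaussBinom_succ_succ']
      ring

end ShuffleStatistics

section AltWords

/-- No odd letter precedes a letter adjacent to it in value. For a permutation of `{1, …, 2n + 1}`
read from right to left, this says that its inverse is alternating. -/
def IsAltRev (r : List ℕ) : Prop :=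
  r.Pairwise fun a b => a % 2 = 1 → b ≠ a + 1 ∧ a ≠ b + 1

/-- The words with letter set `{2j + 1, …, 2j + 2n + 1}` that satisfy `IsAltRev`. The shift `j` is
there because the larger letters of such a word are a shifted word of the same kind. -/
def altWords (j n : ℕ) : Finset (List ℕ) :=
  (List.range' (2 * j + 1) (2 * n + 1)).permutations.toFinset.filter IsAltRev

variable {j k m n : ℕ} {r x y u : List ℕ}

theorem mem_altWords :
    r ∈ altWords j n ↔
      r.Nodup ∧ (∀ a, a ∈ r ↔ 2 * j < a ∧ a ≤ 2 * (j + n) + 1) ∧ IsAltRev r := by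
  have hrange : (List.range' (2 * j + 1) (2 * n + 1)).Nodup := List.nodup_range'
  rw [altWords, Finset.mem_filter, List.mem_toFinset, List.mem_permutations, ← and_assoc]
  refine and_congr_left fun _ => ⟨fun h => ⟨h.nodup_iff.2 hrange, fun a => ?_⟩, fun h => ?_⟩
  · rw [h.mem_iff, List.mem_range'_1]
    omega
  · rw [List.perm_ext_iff_of_nodup h.1 hrange]
    intro a
    rw [h.2, List.mem_range'_1]
    omega

theorem mem_iff_of_mem_altWords (h : r ∈ altWords j n) (a : ℕ) :
    a ∈ r ↔ 2 * j < a ∧ a ≤ 2 * (j + n) + 1 :=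
  (mem_altWords.1 h).2.1 a

theorem length_of_mem_altWords (h : r ∈ altWords j n) : r.length = 2 * n + 1 := by
  rw [altWords, Finset.mem_filter, List.mem_toFinset, List.mem_permutations] at h
  simpa only [List.length_range'] using h.1.length_eq

theorem altWords_zero (j : ℕ) : altWords j 0 = {[2 * j + 1]} := by
  ext r
  simp only [altWords, Nat.mul_zero, Nat.zero_add, List.range'_one, mem_filter, List.mem_toFinset,
    List.mem_permutations, List.perm_singleton, mem_singleton, and_iff_left_iff_imp]
  rintro rfl
  exact List.pairwise_singleton _ _

theorem exists_head_of_mem_altWords {a : ℕ} (h : a :: u ∈ altWords j (n + 1)) :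
    ∃ p ∈ antidiagonal n, a = 2 * (j + p.1 + 1) := by
  obtain ⟨-, hmem, halt⟩ := mem_altWords.1 h
  have ha := (hmem a).1 List.mem_cons_self
  have hadj : ∀ b, 2 * j < b → b ≤ 2 * (j + (n + 1)) + 1 → b ≠ a → a % 2 = 1 →
      b ≠ a + 1 ∧ a ≠ b + 1 := fun b hb hb' hba =>
    (List.pairwise_cons.1 halt).1 b
      ((List.mem_cons.1 ((hmem b).2 ⟨hb, hb'⟩)).resolve_left hba)
  have heven : a % 2 = 0 := by
    by_contra hodd
    rcases lt_or_ge a (2 * (j + (n + 1)) + 1) with hlt | hge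
    · exact (hadj (a + 1) (by omega) hlt (by omega) (by omega)).1 rfl
    · exact (hadj (a - 1) (by omega) (by omega) (by omega) (by omega)).2 (by omega)
  exact ⟨(a / 2 - (j + 1), j + n + 1 - a / 2), HasAntidiagonal.mem_antidiagonal.2 (by omega),
    by omega⟩

theorem filter_mem_altWords (h : 2 * (j + k + 1) :: u ∈ altWords j (k + m + 1)) :
    u.filter (fun a => decide (a < 2 * (j + k + 1))) ∈ altWords j k ∧
      u.filter (fun a => !decide (a < 2 * (j + k + 1))) ∈ altWords (j + k + 1) m := by
  obtain ⟨hnodup, hmem, halt⟩ := mem_altWords.1 h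
  obtain ⟨hc, hnodup⟩ := List.nodup_cons.1 hnodup
  have halt := (List.pairwise_cons.1 halt).2
  have hu : ∀ a, a ∈ u ↔ a ≠ 2 * (j + k + 1) ∧ 2 * j < a ∧ a ≤ 2 * (j + (k + m + 1)) + 1 := by
    intro a
    rw [← hmem, List.mem_cons]
    grind
  refine ⟨mem_altWords.2 ⟨hnodup.filter _, fun a => ?_, halt.filter _⟩,
    mem_altWords.2 ⟨hnodup.filter _, fun a => ?_, halt.filter _⟩⟩
  · rw [List.mem_filter, hu, decide_eq_true_eq]
    omega
  · rw [List.mem_filter, hu, Bool.not_eq_true', decide_eq_false_iff_not]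
    omega

theorem cons_mem_altWords (hx : x ∈ altWords j k) (hy : y ∈ altWords (j + k + 1) m)
    (hu : u ∈ shuffles x y) : 2 * (j + k + 1) :: u ∈ altWords j (k + m + 1) := by
  obtain ⟨hxnodup, hxmem, hxalt⟩ := mem_altWords.1 hx
  obtain ⟨hynodup, hymem, hyalt⟩ := mem_altWords.1 hy
  have hmem : ∀ a, a ∈ u ↔ a ∈ x ∨ a ∈ y := fun a => by
    rw [(perm_append_of_mem_shuffles hu).mem_iff, List.mem_append]
  simp only [hxmem, hymem] at hmem
  have hnodup : u.Nodup := pairwise_of_mem_shuffles hxnodup hynodup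
    (fun a ha b hb => by rw [hxmem] at ha; rw [hymem] at hb; omega) hu
  have halt : IsAltRev u := pairwise_of_mem_shuffles hxalt hyalt
    (fun a ha b hb => by rw [hxmem] at ha; rw [hymem] at hb; omega) hu
  refine mem_altWords.2 ⟨List.nodup_cons.2 ⟨?_, hnodup⟩, fun a => ?_,
    List.pairwise_cons.2 ⟨fun b _ _ => by omega, halt⟩⟩
  · rw [hmem]
    omega
  · rw [List.mem_cons, hmem]
    omega

theorem filter_of_mem_shuffles_altWords (hx : x ∈ altWords j k)
    (hy : y ∈ altWords (j + k + 1) m) (hu : u ∈ shuffles x y) :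
    u.filter (fun a => decide (a < 2 * (j + k + 1))) = x ∧
      u.filter (fun a => !decide (a < 2 * (j + k + 1))) = y := by
  refine filter_of_mem_shuffles (fun a ha => decide_eq_true ?_) (fun a ha => decide_eq_false ?_) hu
  · rw [mem_iff_of_mem_altWords hx] at ha
    omega
  · rw [mem_iff_of_mem_altWords hy] at ha
    omega

theorem nodup_shuffles_altWords (hx : x ∈ altWords j k) (hy : y ∈ altWords (j + k + 1) m) :
    (shuffles x y).Nodup := by
  refine nodup_shuffles fun a ha hb => ?_
  rw [mem_iff_of_mem_altWords hx] at ha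
  rw [mem_iff_of_mem_altWords hy] at hb
  omega

theorem sum_altWords_succ {M : Type*} [AddCommMonoid M] (f : List ℕ → M) (j n : ℕ) :
    ∑ r ∈ altWords j (n + 1), f r =
      ∑ p ∈ antidiagonal n, ∑ x ∈ altWords j p.1, ∑ y ∈ altWords (j + p.1 + 1) p.2,
        ((shuffles x y).map fun u => f (2 * (j + p.1 + 1) :: u)).sum := by
  have hshuffles : ∀ p ∈ antidiagonal n,
      ∑ x ∈ altWords j p.1, ∑ y ∈ altWords (j + p.1 + 1) p.2,
        ((shuffles x y).map fun u => f (2 * (j + p.1 + 1) :: u)).sum =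
      ∑ s ∈ (altWords j p.1 ×ˢ altWords (j + p.1 + 1) p.2).sigma
        (fun s => (shuffles s.1 s.2).toFinset), f (2 * (j + p.1 + 1) :: s.2) := by
    intro p _
    rw [Finset.sum_sigma, Finset.sum_product]
    exact Finset.sum_congr rfl fun x hx => Finset.sum_congr rfl fun y hy =>
      (List.sum_toFinset _ (nodup_shuffles_altWords hx hy)).symm
  rw [Finset.sum_congr rfl hshuffles, Finset.sum_sigma']
  symm
  refine Finset.sum_bij (fun s _ => 2 * (j + s.1.1 + 1) :: s.2.2) ?_ ?_ ?_ (fun _ _ => rfl)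
  · rintro ⟨⟨k, m⟩, ⟨x, y⟩, u⟩ h
    simp only [mem_sigma, HasAntidiagonal.mem_antidiagonal, mem_product, List.mem_toFinset] at h
    obtain ⟨rfl, ⟨hx, hy⟩, hu⟩ := h
    exact cons_mem_altWords hx hy hu
  · rintro ⟨⟨k, m⟩, ⟨x, y⟩, u⟩ h ⟨⟨k', m'⟩, ⟨x', y'⟩, u'⟩ h' heq
    simp only [mem_sigma, HasAntidiagonal.mem_antidiagonal, mem_product, List.mem_toFinset] at h h'
    simp only [List.cons.injEq] at heq
    obtain ⟨hhead, rfl⟩ := heq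
    obtain rfl : k = k' := by omega
    obtain rfl : m = m' := by omega
    obtain ⟨rfl, rfl⟩ := filter_of_mem_shuffles_altWords h.2.1.1 h.2.1.2 h.2.2
    obtain ⟨rfl, rfl⟩ := filter_of_mem_shuffles_altWords h'.2.1.1 h'.2.1.2 h'.2.2
    rfl
  · intro r hr
    cases r with
    | nil => simpa using length_of_mem_altWords hr
    | cons a u =>
      obtain ⟨⟨k, m⟩, hp, rfl⟩ := exists_head_of_mem_altWords hr
      obtain rfl := HasAntidiagonal.mem_antidiagonal.1 hp
      refine ⟨⟨(k, m), ⟨u.filter fun a => decide (a < 2 * (j + k + 1)),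
        u.filter fun a => !decide (a < 2 * (j + k + 1))⟩, u⟩, ?_, rfl⟩
      simp only [mem_sigma, mem_product, List.mem_toFinset]
      exact ⟨hp, filter_mem_altWords hr, mem_shuffles_filter _ u⟩

end AltWords

section Recurrence

variable {j k m : ℕ} {x y u : List ℕ}

/-- The involution `(0,1)(2,3)(4,5)⋯` of the letters, a version of `κ_{2n+1}` that does not depend
on `n`. It sends `1` to `0`, which `κ_{2n+1}` does not, but the two order the letters
`1, …, 2n + 1` in the same way. -/
def kappa (a : ℕ) : ℕ :=
  if a % 2 = 0 then a + 1 else a - 1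

theorem kappa_lt_kappa {a b : ℕ} (hab : a < b) (h : a % 2 = 1 ∨ a + 1 < b) :
    kappa a < kappa b := by
  unfold kappa
  split_ifs <;> omega

/-- The pairs of consecutive even letters, so that `pairCount EvenSucc` is the number of descents
of the subword `π_e` on the reversed word of `π⁻¹`. -/
def EvenSucc (a b : ℕ) : Prop :=
  a % 2 = 0 ∧ b = a + 2

/-- The statistic `inv(π) + des(π_e)`, on the reversed word of `π⁻¹`. -/
def invDes (r : List ℕ) : ℕ :=
  pairCount (· < ·) r + pairCount EvenSucc r

theorem majRev_map_kappa_cons_left (hx : x ∈ altWords j k) :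
    majRev ((2 * (j + k + 1) :: x).map kappa) = majRev (x.map kappa) := by
  cases x with
  | nil => rfl
  | cons a x =>
    have ha := (mem_iff_of_mem_altWords hx a).1 List.mem_cons_self
    have hlt : kappa a < kappa (2 * (j + k + 1)) := kappa_lt_kappa (by omega) (by omega)
    simp only [List.map_cons, majRev, hlt.not_gt, if_false, zero_add]

theorem majRev_map_kappa_cons_right (hy : y ∈ altWords j (m + 1)) :
    majRev ((2 * j :: y).map kappa) = 2 * (m + 1) + 1 + majRev (y.map kappa) := by
  have hlength := length_of_mem_altWords hy
  cases y with
  | nil => simp at hlength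
  | cons a y =>
    obtain ⟨p, -, rfl⟩ := exists_head_of_mem_altWords hy
    have hlt : kappa (2 * j) < kappa (2 * (j + p.1 + 1)) := kappa_lt_kappa (by omega) (by omega)
    rw [List.length_cons] at hlength
    simp only [List.map_cons, majRev, hlt, if_true, List.length_map, hlength]

variable {R : Type*} [CommSemiring R] (q : R)

theorem sum_shuffles_pow_majRev_map_kappa (hx : x ∈ altWords j k)
    (hy : y ∈ altWords (j + k + 1) m) :
    ((shuffles x y).map fun u => q ^ majRev ((2 * (j + k + 1) :: u).map kappa)).sum =
      q ^ (if m = 0 then 0 else 2 * m + 1) * gaussBinom q (2 * k + 1) (2 * m + 1) *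
        (q ^ majRev (x.map kappa) * q ^ majRev (y.map kappa)) := by
  have hlt : ∀ a ∈ x.map kappa, ∀ b ∈ y.map kappa, a < b := by
    simp only [List.forall_mem_map]
    intro a ha b hb
    rw [mem_iff_of_mem_altWords hx] at ha
    rw [mem_iff_of_mem_altWords hy] at hb
    exact kappa_lt_kappa (by omega) (by omega)
  have hsum := sum_shuffles_pow_majRev_cons q (kappa (2 * (j + k + 1))) hlt
  simp only [shuffles_map, List.map_map, Function.comp_def, List.length_map,
    length_of_mem_altWords hx, length_of_mem_altWords hy, ← List.map_cons,
    majRev_map_kappa_cons_left hx] at hsum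
  rw [hsum]
  rcases m with _ | m
  · rw [altWords_zero, Finset.mem_singleton] at hy
    have hle : ¬kappa (2 * (j + k + 1)) < kappa (2 * (j + k + 1) + 1) := by
      unfold kappa
      split_ifs <;> omega
    simp only [hy, List.map_cons, List.map_nil, majRev, hle, if_true, if_false]
    ring
  · rw [majRev_map_kappa_cons_right hy, if_neg m.succ_ne_zero]
    ring

theorem countP_of_mem_shuffles_altWords {P : ℕ → Prop} [DecidablePred P]
    (hx : x ∈ altWords j k) (hu : u ∈ shuffles x y) (hP : ∀ a, P a → 2 * (j + k + 1) < a) :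
    u.countP P = y.countP P := by
  have hcount : x.countP P = 0 := List.countP_eq_zero.2 fun a ha h => by
    rw [mem_iff_of_mem_altWords hx] at ha
    have := hP a (of_decide_eq_true h)
    omega
  rw [(perm_append_of_mem_shuffles hu).countP_eq, List.countP_append, hcount, zero_add]

theorem invDes_cons_of_mem_shuffles (hx : x ∈ altWords j k) (hy : y ∈ altWords (j + k + 1) m)
    (hu : u ∈ shuffles x y) :
    invDes (2 * (j + k + 1) :: u) =
      1 + (if m = 0 then 0 else 2 * m + 1) + pairCount EvenSucc x + pairCount EvenSucc y +
        pairCount (· < ·) u := by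
  have hlt : u.countP (2 * (j + k + 1) < ·) = 2 * m + 1 := by
    rw [countP_of_mem_shuffles_altWords hx hu fun _ h => h, ← length_of_mem_altWords hy,
      List.countP_eq_length]
    exact fun a ha => decide_eq_true ((mem_iff_of_mem_altWords hy a).1 ha).1
  have hsucc : u.countP (EvenSucc (2 * (j + k + 1))) = if m = 0 then 0 else 1 := by
    have hcount : u.countP (EvenSucc (2 * (j + k + 1))) = y.count (2 * (j + k + 1) + 2) := by
      rw [countP_of_mem_shuffles_altWords hx hu fun a ha => by rw [ha.2]; omega, List.count]
      refine List.countP_congr fun a _ => ?_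
      simp [EvenSucc]
    have hmem : 2 * (j + k + 1) + 2 ∈ y ↔ ¬m = 0 := by
      rw [mem_iff_of_mem_altWords hy]
      omega
    rw [hcount, (mem_altWords.1 hy).1.count, if_congr hmem rfl rfl, ite_not]
  have hcross : pairCount EvenSucc u = pairCount EvenSucc x + pairCount EvenSucc y := by
    refine pairCount_of_mem_shuffles (fun a ha b hb => ?_) hu
    rw [mem_iff_of_mem_altWords hx] at ha
    rw [mem_iff_of_mem_altWords hy] at hb
    unfold EvenSucc
    omega
  rw [invDes, pairCount, pairCount, hlt, hsucc, hcross]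
  split_ifs <;> omega

theorem sum_shuffles_pow_invDes (hx : x ∈ altWords j k) (hy : y ∈ altWords (j + k + 1) m) :
    ((shuffles x y).map fun u => q ^ invDes (2 * (j + k + 1) :: u)).sum =
      q ^ (1 + if m = 0 then 0 else 2 * m + 1) * gaussBinom q (2 * k + 1) (2 * m + 1) *
        (q ^ invDes x * q ^ invDes y) := by
  have hlt : ∀ a ∈ x, ∀ b ∈ y, a < b := by
    intro a ha b hb
    rw [mem_iff_of_mem_altWords hx] at ha
    rw [mem_iff_of_mem_altWords hy] at hb
    omega
  have hpow : ∀ u ∈ shuffles x y, q ^ invDes (2 * (j + k + 1) :: u) =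
      q ^ (1 + (if m = 0 then 0 else 2 * m + 1) + pairCount EvenSucc x + pairCount EvenSucc y) *
        q ^ pairCount (· < ·) u := fun u hu => by
    rw [invDes_cons_of_mem_shuffles hx hy hu, pow_add]
  rw [List.map_congr_left hpow, List.sum_map_mul_left, sum_shuffles_pow_pairCount_lt q hlt,
    length_of_mem_altWords hx, length_of_mem_altWords hy, invDes, invDes]
  ring

theorem pow_mul_sum_altWords_pow_majRev (n j : ℕ) :
    q ^ n * ∑ r ∈ altWords j n, q ^ majRev (r.map kappa) = ∑ r ∈ altWords j n, q ^ invDes r := by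
  induction n using Nat.strong_induction_on generalizing j with
  | h n ih =>
    rcases n with _ | n
    · simp [altWords_zero, majRev, invDes, pairCount]
    rw [sum_altWords_succ, sum_altWords_succ, Finset.mul_sum]
    refine Finset.sum_congr rfl fun p hp => ?_
    obtain rfl := HasAntidiagonal.mem_antidiagonal.1 hp
    rw [Finset.sum_congr rfl fun x hx => Finset.sum_congr rfl fun y hy =>
        sum_shuffles_pow_majRev_map_kappa q hx hy,
      Finset.sum_congr rfl fun x hx => Finset.sum_congr rfl fun y hy =>
        sum_shuffles_pow_invDes q hx hy]
    simp only [← Finset.mul_sum, ← Finset.sum_mul]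
    rw [← ih p.1 (by omega), ← ih p.2 (by omega)]
    ring

end Recurrence

section ReversedWord

variable {w : ℕ → ℕ} {m : ℕ}

/-- The list `[w_m, …, w_1]`: a 1-based word of length `m`, read from right to left. -/
def revWord (w : ℕ → ℕ) (m : ℕ) : List ℕ :=
  ((List.range' 1 m).map w).reverse

theorem revWord_succ (w : ℕ → ℕ) (m : ℕ) : revWord w (m + 1) = w (m + 1) :: revWord w m := by
  simp [revWord, List.range'_concat, add_comm]

theorem length_revWord (w : ℕ → ℕ) (m : ℕ) : (revWord w m).length = m := by
  simp [revWord]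

theorem map_revWord (f w : ℕ → ℕ) (m : ℕ) : (revWord w m).map f = revWord (f ∘ w) m := by
  simp [revWord]

theorem mem_revWord {a : ℕ} : a ∈ revWord w m ↔ ∃ i, (1 ≤ i ∧ i ≤ m) ∧ w i = a := by
  simp [revWord, add_comm 1 m]

theorem pairwise_revWord {P : ℕ → ℕ → Prop} :
    (revWord w m).Pairwise P ↔ ∀ i j, 1 ≤ i → i < j → j ≤ m → P (w j) (w i) := by
  induction m with
  | zero => exact iff_of_true List.Pairwise.nil fun i j _ _ _ => by omega
  | succ m ih =>
    rw [revWord_succ, List.pairwise_cons, ih]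
    refine ⟨fun ⟨hhead, htail⟩ i j hi hij hj => ?_,
      fun h => ⟨fun a ha => ?_, fun i j hi hij hj => h i j hi hij (by omega)⟩⟩
    · rcases hj.eq_or_lt with rfl | hj
      · exact hhead _ (mem_revWord.2 ⟨i, by omega, rfl⟩)
      · exact htail i j hi hij (by omega)
    · obtain ⟨i, hi, rfl⟩ := mem_revWord.1 ha
      exact h i (m + 1) hi.1 (by omega) le_rfl

theorem majRev_revWord (w : ℕ → ℕ) : ∀ m, majRev (revWord w m) = majW m w
  | 0 => rfl
  | 1 => rfl
  | m + 2 => by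
    have ih := majRev_revWord w (m + 1)
    rw [revWord_succ] at ih
    rw [revWord_succ, revWord_succ, majRev, ih, length_revWord, majW, majW,
      show m + 2 - 1 = m + 1 from rfl, Finset.sum_Icc_succ_top (by omega), add_comm]
    rfl

theorem countP_revWord (p : ℕ → Prop) [DecidablePred p] (w : ℕ → ℕ) (m : ℕ) :
    (revWord w m).countP p = #{i ∈ Icc 1 m | p (w i)} := by
  induction m with
  | zero => rfl
  | succ m ih =>
    rw [revWord_succ, List.countP_cons, ih, Finset.card_filter, Finset.card_filter,
      Finset.sum_Icc_succ_top (by omega)]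
    simp only [decide_eq_true_eq]

theorem pairCount_revWord (P : ℕ → ℕ → Prop) [DecidableRel P] (w : ℕ → ℕ) (m : ℕ) :
    pairCount P (revWord w m) =
      #{p ∈ Icc 1 m ×ˢ Icc 1 m | p.1 < p.2 ∧ P (w p.2) (w p.1)} := by
  have hsum : pairCount P (revWord w m) =
      ∑ j ∈ Icc 1 m, #{i ∈ Icc 1 (j - 1) | P (w j) (w i)} := by
    induction m with
    | zero => rfl
    | succ m ih =>
      rw [revWord_succ, pairCount, ih, countP_revWord (P (w (m + 1))),
        Finset.sum_Icc_succ_top (by omega), add_comm, Nat.add_sub_cancel]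
  rw [hsum, Finset.card_filter, Finset.sum_product_right]
  refine Finset.sum_congr rfl fun j hj => ?_
  rw [← Finset.card_filter]
  congr 1
  ext i
  simp only [mem_filter, mem_Icc] at hj ⊢
  grind

theorem ndesW_add_desW (h : ∀ i ∈ Icc 1 (m - 1), w i ≠ w (i + 1)) :
    ndesW m w + desW m w = m := by
  have hdes : desW m w = #{i ∈ Icc 1 m | ¬(i = m ∨ w i < w (i + 1))} := by
    rw [desW]
    congr 1
    ext i
    have := h i
    simp only [mem_filter, mem_Icc] at this ⊢
    grind
  rw [hdes, ndesW, Finset.card_filter_add_card_filter_not, Nat.card_Icc, Nat.add_sub_cancel]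

end ReversedWord

section Permutation

variable {N n : ℕ}

theorem word_mem (π : Equiv.Perm (Fin N)) {i : ℕ} (h : 1 ≤ i ∧ i ≤ N) :
    1 ≤ word π i ∧ word π i ≤ N := by
  rw [word, dif_pos h]
  omega

theorem word_symm_word (π : Equiv.Perm (Fin N)) {i : ℕ} (h : 1 ≤ i ∧ i ≤ N) :
    word π.symm (word π i) = i := by
  have hfin : (⟨word π i - 1, by have := word_mem π h; omega⟩ : Fin N) = π ⟨i - 1, by omega⟩ := by
    ext
    simp [word, h]
  rw [word, dif_pos (word_mem π h), hfin, Equiv.symm_apply_apply]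
  exact Nat.sub_add_cancel h.1

theorem word_word_symm (π : Equiv.Perm (Fin N)) {i : ℕ} (h : 1 ≤ i ∧ i ≤ N) :
    word π (word π.symm i) = i :=
  word_symm_word π.symm h

theorem eq_of_word_eq (π : Equiv.Perm (Fin N)) {i j : ℕ} (hi : 1 ≤ i ∧ i ≤ N) (hj : 1 ≤ j ∧ j ≤ N)
    (h : word π i = word π j) : i = j := by
  rw [← word_symm_word π hi, h, word_symm_word π hj]

theorem pairwise_revWord_symm {P : ℕ → ℕ → Prop} (π : Equiv.Perm (Fin N)) :
    (revWord (word π.symm) N).Pairwise P ↔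
      ∀ a b, 1 ≤ a ∧ a ≤ N → 1 ≤ b ∧ b ≤ N → word π b < word π a → P a b := by
  rw [pairwise_revWord]
  constructor
  · intro h a b ha hb hba
    have hP := h (word π b) (word π a) (word_mem π hb).1 hba (word_mem π ha).2
    rwa [word_symm_word π ha, word_symm_word π hb] at hP
  · intro h i j hi hij hj
    have hi' : 1 ≤ i ∧ i ≤ N := by omega
    have hj' : 1 ≤ j ∧ j ≤ N := by omega
    refine h _ _ (word_mem π.symm hj') (word_mem π.symm hi') ?_
    rwa [word_word_symm π hi', word_word_symm π hj']

theorem isAltRev_revWord_symm (π : Equiv.Perm (Fin N)) :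
    IsAltRev (revWord (word π.symm) N) ↔ IsAltW N (word π) := by
  rw [IsAltRev, pairwise_revWord_symm]
  constructor
  · intro h i hi
    rw [mem_Icc] at hi
    have hi₁ : 1 ≤ i ∧ i ≤ N := by omega
    have hi₂ : 1 ≤ i + 1 ∧ i + 1 ≤ N := by omega
    have hne : word π i ≠ word π (i + 1) := fun heq => by
      have := eq_of_word_eq π hi₁ hi₂ heq
      omega
    refine ⟨fun hodd => ?_, fun heven => ?_⟩
    · by_contra hlt
      exact (h i (i + 1) hi₁ hi₂ (by omega) hodd).1 rfl
    · by_contra hlt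
      exact (h (i + 1) i hi₂ hi₁ (by omega) (by omega)).2 rfl
  · rintro h a b ha hb hba hodd
    refine ⟨?_, ?_⟩
    · rintro rfl
      exact hba.not_gt ((h a (mem_Icc.2 (by omega))).1 hodd)
    · rintro rfl
      exact hba.not_gt ((h b (mem_Icc.2 (by omega))).2 (by omega))

theorem pairCount_revWord_symm (P : ℕ → ℕ → Prop) [DecidableRel P] (π : Equiv.Perm (Fin N)) :
    pairCount P (revWord (word π.symm) N) =
      #{p ∈ Icc 1 N ×ˢ Icc 1 N | word π p.2 < word π p.1 ∧ P p.1 p.2} := by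
  rw [pairCount_revWord]
  refine Finset.card_nbij' (fun p => (word π.symm p.2, word π.symm p.1))
    (fun p => (word π p.2, word π p.1)) ?_ ?_ ?_ ?_
  all_goals
    rintro ⟨i, j⟩ h
    simp only [coe_filter, mem_product, mem_Icc, Set.mem_ofPred_eq] at h
    obtain ⟨⟨hi, hj⟩, h⟩ := h
  · simpa [word_word_symm π hi, word_word_symm π hj, word_mem _ hi, word_mem _ hj] using h
  · simpa [word_symm_word π hi, word_symm_word π hj, word_mem _ hi, word_mem _ hj] using h
  · simp only [word_word_symm π hi, word_word_symm π hj]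
  · simp only [word_symm_word π hi, word_symm_word π hj]

theorem pairCount_evenSucc_revWord_symm (π : Equiv.Perm (Fin (2 * n + 1))) :
    pairCount EvenSucc (revWord (word π.symm) (2 * n + 1)) = desW n (evenWord π) := by
  rw [pairCount_revWord_symm, desW]
  refine Finset.card_nbij' (fun p => p.1 / 2) (fun i => (2 * i, 2 * (i + 1))) ?_ ?_ ?_ ?_
  · rintro ⟨i, j⟩ h
    simp only [coe_filter, mem_product, mem_Icc, Set.mem_ofPred_eq] at h ⊢
    obtain ⟨⟨hi, hj⟩, hlt, heven, rfl⟩ := h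
    refine ⟨by omega, ?_⟩
    rwa [evenWord, evenWord, show 2 * (i / 2 + 1) = i + 2 by omega,
      show 2 * (i / 2) = i by omega]
  · intro i h
    simp only [coe_filter, mem_product, mem_Icc, Set.mem_ofPred_eq] at h ⊢
    exact ⟨by omega, h.2, by omega, rfl⟩
  · rintro ⟨i, j⟩ h
    simp only [coe_filter, mem_product, mem_Icc, Set.mem_ofPred_eq] at h
    obtain ⟨-, -, heven, rfl⟩ := h
    simp only [Prod.mk.injEq]
    omega
  · intro i _
    simp only
    omega

theorem invDes_revWord_symm (π : Equiv.Perm (Fin (2 * n + 1))) :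
    invDes (revWord (word π.symm) (2 * n + 1)) =
      invW (2 * n + 1) (word π) + desW n (evenWord π) := by
  rw [invDes, pairCount_evenSucc_revWord_symm, pairCount_revWord_symm, invW]
  simp only [and_comm]

theorem invDes_revWord_symm_add_ndesW (π : Equiv.Perm (Fin (2 * n + 1))) :
    invDes (revWord (word π.symm) (2 * n + 1)) + ndesW n (evenWord π) =
      invW (2 * n + 1) (word π) + n := by
  have hne : ∀ i ∈ Icc 1 (n - 1), evenWord π i ≠ evenWord π (i + 1) := by
    intro i hi heq
    rw [mem_Icc] at hi
    have := eq_of_word_eq π (by omega) (by omega) heq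
    omega
  rw [invDes_revWord_symm, add_assoc, add_comm (desW _ _), ndesW_add_desW hne]

theorem majRev_map_kappa_revWord_symm (π : Equiv.Perm (Fin (2 * n + 1))) :
    majRev ((revWord (word π.symm) (2 * n + 1)).map kappa) = majKappaInv (2 * n + 1) π := by
  rw [map_revWord, majRev_revWord, majKappaInv, majW, majW]
  refine Finset.sum_congr rfl fun i hi => if_congr ?_ rfl rfl
  rw [mem_Icc] at hi
  have hi₁ := word_mem π.symm (i := i) (by omega)
  have hi₂ := word_mem π.symm (i := i + 1) (by omega)
  simp only [Function.comp_apply]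
  unfold kappa kappaNat
  split_ifs <;> omega

theorem revWord_perm_range' (π : Equiv.Perm (Fin N)) :
    (revWord (word π) N).Perm (List.range' 1 N) := by
  have hnodup : (revWord (word π) N).Nodup := pairwise_revWord.2 fun i j hi hij hj h =>
    hij.ne' (eq_of_word_eq π (by omega) (by omega) h)
  refine (List.perm_ext_iff_of_nodup hnodup List.nodup_range').2 fun a => ?_
  rw [mem_revWord, List.mem_range'_1]
  constructor
  · rintro ⟨i, hi, rfl⟩
    have := word_mem π hi
    omega
  · intro ha
    exact ⟨word π.symm a, word_mem π.symm (by omega), word_word_symm π (by omega)⟩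

theorem revWord_symm_injective :
    Function.Injective fun π : Equiv.Perm (Fin N) => revWord (word π.symm) N := by
  intro π ρ h
  have hmap := List.map_inj_left.1 (List.reverse_injective h)
  refine Equiv.symm_bijective.injective (Equiv.ext fun i => Fin.ext ?_)
  have := hmap (i + 1) (List.mem_range'_1.2 (by omega))
  simpa [word, Nat.succ_le_iff] using this

theorem image_revWord_symm (N : ℕ) :
    univ.image (fun π : Equiv.Perm (Fin N) => revWord (word π.symm) N) =
      (List.range' 1 N).permutations.toFinset := by
  refine Finset.eq_of_subset_of_card_le (Finset.image_subset_iff.2 fun π _ => ?_) ?_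
  · rw [List.mem_toFinset, List.mem_permutations]
    exact revWord_perm_range' π.symm
  · rw [Finset.card_image_of_injective _ revWord_symm_injective, Finset.card_univ,
      Fintype.card_perm, Fintype.card_fin]
    exact (List.toFinset_card_le _).trans_eq
      (by rw [List.length_permutations, List.length_range'])

theorem sum_altPerms_eq_sum_altWords {M : Type*} [AddCommMonoid M] (n : ℕ) (f : List ℕ → M) :
    ∑ π ∈ altPerms (2 * n + 1), f (revWord (word π.symm) (2 * n + 1)) =
      ∑ r ∈ altWords 0 n, f r := by
  rw [altWords, Nat.mul_zero, Nat.zero_add, ← image_revWord_symm, Finset.filter_image,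
    Finset.sum_image revWord_symm_injective.injOn, altPerms]
  simp only [isAltRev_revWord_symm]

end Permutation

theorem statement_5_general (R : Type*) [CommSemiring R] (n : ℕ) :
    (∑ π ∈ altPerms (2 * n + 1),
        (LaurentPolynomial.T (majKappaInv (2 * n + 1) π : ℤ) : LaurentPolynomial R)) =
      ∑ π ∈ altPerms (2 * n + 1),
        (LaurentPolynomial.T
          ((invW (2 * n + 1) (word π) : ℤ) - (ndesW n (evenWord π) : ℤ)) :
            LaurentPolynomial R) := by
  have hwords := pow_mul_sum_altWords_pow_majRev (LaurentPolynomial.T 1 : LaurentPolynomial R) n 0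
  rw [← sum_altPerms_eq_sum_altWords, ← sum_altPerms_eq_sum_altWords] at hwords
  simp only [LaurentPolynomial.T_pow, mul_one, majRev_map_kappa_revWord_symm] at hwords
  rw [← one_mul (∑ π ∈ _, _), ← LaurentPolynomial.T_zero, ← neg_add_cancel (n : ℤ),
    LaurentPolynomial.T_add, mul_assoc, hwords, Finset.mul_sum]
  refine Finset.sum_congr rfl fun π _ => ?_
  rw [← LaurentPolynomial.T_add]
  congr 1
  have := invDes_revWord_symm_add_ndesW π
  omega

theorem statement_5 (n : ℕ) :
    (∑ π ∈ altPerms (2 * n + 1),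
        (LaurentPolynomial.T (majKappaInv (2 * n + 1) π : ℤ) : LaurentPolynomial ℤ)) =
      ∑ π ∈ altPerms (2 * n + 1),
        (LaurentPolynomial.T
          ((invW (2 * n + 1) (word π) : ℤ) - (ndesW n (evenWord π) : ℤ)) :
            LaurentPolynomial ℤ) :=
  statement_5_general ℤ n

end Paper
end
end
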